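/- arXiv:2506.16598 — 2 statements merged into one kernel-verified Lean document; each statement's English description precedes it below -/
import Mathlib

section
/- Let n ≥ 1. The map φ, sending an n-periodic edge set Ē on ℤ to the edge set {{a mod 4n, b mod 4n} : [a,b] ∈ Ē} on the 4n-gon, restricts to a bijection between n-periodic 2-triangulations on ℤ (equivalently, 2-triangulations on the half-cylinder with n marked points) and n-periodic 2-triangulations on the 4n-gon (2-triangulations on the 4n-gon invariant under rotation by π/2 radians, i.e., under v ↦ v+n). -/
/- Edges on the universal cover of the half-cylinder, modeled by the integers.
   An edge is an unordered pair of distinct integers, represented as an ordered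
   pair `(a, b)` with `a < b` (validity). -/

namespace Multitriangulation

abbrev Edge := ℤ × ℤ

/-- Translate an edge by `t`: `[a,b] + t = [a+t, b+t]`. -/
def shift (e : Edge) (t : ℤ) : Edge := (e.1 + t, e.2 + t)

/-- Two edges (as unordered pairs of integers) cross:
their endpoints strictly interleave. -/
def Crosses (e f : Edge) : Prop :=
  (min e.1 e.2 < min f.1 f.2 ∧ min f.1 f.2 < max e.1 e.2 ∧ max e.1 e.2 < max f.1 f.2) ∨
  (min f.1 f.2 < min e.1 e.2 ∧ min e.1 e.2 < max f.1 f.2 ∧ max f.1 f.2 < max e.1 e.2)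

/-- A finite set of edges is an `l`-crossing if it consists of `l` pairwise
crossing edges. -/
def IsCrossing (l : ℕ) (S : Finset Edge) : Prop :=
  S.card = l ∧ ∀ e ∈ S, ∀ f ∈ S, e ≠ f → Crosses e f

/-- A set of edges is `l`-crossing-free if no `l` of its edges pairwise cross. -/
def CrossingFree (l : ℕ) (E : Set Edge) : Prop :=
  ¬ ∃ S : Finset Edge, ↑S ⊆ E ∧ IsCrossing l S

/-- A set of edges is `n`-periodic if `e ∈ E ↔ e + n ∈ E`. -/
def Periodic (n : ℕ) (E : Set Edge) : Prop := ∀ e, e ∈ E ↔ shift e (n : ℤ) ∈ E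

/-- All members are genuine edges `[a,b]` with `a < b`. -/
def ValidEdges (E : Set Edge) : Prop := ∀ e ∈ E, e.1 < e.2

/-- An `n`-periodic `k`-triangulation on `ℤ`: an `n`-periodic
`(k+1)`-crossing-free set of edges that is maximal under inclusion among
`n`-periodic `(k+1)`-crossing-free sets of edges. -/
def IsTriangulation (n k : ℕ) (T : Set Edge) : Prop :=
  ValidEdges T ∧ Periodic n T ∧ CrossingFree (k+1) T ∧
  ∀ T', ValidEdges T' → Periodic n T' → CrossingFree (k+1) T' → T ⊆ T' → T' = T

/-- Interleaving of representatives `0 ≤ a < b < m`, `0 ≤ c < d < m`: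
`a<c<b<d` or `c<a<d<b` (formulated symmetrically via `min`/`max`). -/
def crossIndex (a b c d : ℕ) : Prop :=
  (min a b < min c d ∧ min c d < max a b ∧ max a b < max c d) ∨
  (min c d < min a b ∧ min a b < max c d ∧ max c d < max a b)

/-- Two edges of the `m`-gon (vertices labeled by `ZMod m`) cross: their
endpoints interleave in cyclic order, via the representatives in `[0, m)`. -/
def PolyCrosses {m : ℕ} (e f : Sym2 (ZMod m)) : Prop :=
  ∃ x y z w : ZMod m, e = s(x, y) ∧ f = s(z, w) ∧ crossIndex x.val y.val z.val w.val

/-- A finite set of polygon edges is an `l`-crossing if it consists of `l`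
pairwise crossing edges. -/
def PolyIsCrossing {m : ℕ} (l : ℕ) (S : Finset (Sym2 (ZMod m))) : Prop :=
  S.card = l ∧ ∀ e ∈ S, ∀ f ∈ S, e ≠ f → PolyCrosses e f

/-- A set of polygon edges is `l`-crossing-free. -/
def PolyCrossingFree {m : ℕ} (l : ℕ) (E : Set (Sym2 (ZMod m))) : Prop :=
  ¬ ∃ S : Finset (Sym2 (ZMod m)), ↑S ⊆ E ∧ PolyIsCrossing l S

/-- Invariance under the rotation `v ↦ v + n`. -/
def PolyPeriodic (n : ℕ) {m : ℕ} (T : Set (Sym2 (ZMod m))) : Prop :=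
  ∀ e, e ∈ T ↔ Sym2.map (· + (n : ZMod m)) e ∈ T

/-- All members are genuine edges (pairs of distinct vertices). -/
def PolyValid {m : ℕ} (T : Set (Sym2 (ZMod m))) : Prop := ∀ e ∈ T, ¬ e.IsDiag

/-- A `2`-triangulation on the `m`-gon: a 3-crossing-free set of edges,
maximal under inclusion among 3-crossing-free sets of edges. -/
def IsPolyTriangulation {m : ℕ} (T : Set (Sym2 (ZMod m))) : Prop :=
  PolyValid T ∧ PolyCrossingFree 3 T ∧
  ∀ T', PolyValid T' → PolyCrossingFree 3 T' → T ⊆ T' → T' = T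

/-- The projection `φ` sending an edge set on `ℤ` to an edge set on the
`4n`-gon: `[a,b] ↦ {a mod 4n, b mod 4n}`. -/
def phi (n : ℕ) (E : Set Edge) : Set (Sym2 (ZMod (4 * n))) :=
  {x | ∃ e ∈ E, x = s(((e.1 : ZMod (4 * n))), ((e.2 : ZMod (4 * n))))}

/-! ### Crossing of integer edges -/

def cr (a b c d : ℤ) : Prop := (a < c ∧ c < b ∧ b < d) ∨ (c < a ∧ a < d ∧ d < b)

lemma cr_symm {a b c d : ℤ} (h : cr a b c d) : cr c d a b := by
  unfold cr at *; omega

lemma crosses_iff {a b c d : ℤ} (h : a < b) (hcd : c < d) :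
    Crosses (a, b) (c, d) ↔ cr a b c d := by
  unfold Crosses cr
  simp only [min_eq_left h.le, min_eq_left hcd.le, max_eq_right h.le, max_eq_right hcd.le]

/-- No three pairwise crossing edges, spelled out. -/
def NC (T : Set Edge) : Prop := ∀ a b c d u v : ℤ, (a, b) ∈ T → (c, d) ∈ T → (u, v) ∈ T →
  cr a b c d → cr a b u v → cr c d u v → False

lemma crossingFree_iff {T : Set Edge} (hv : ValidEdges T) : CrossingFree 3 T ↔ NC T := by
  constructor
  · intro h a b c d u v h1 h2 h3 c1 c2 c3
    apply h
    have n1 : ((a, b) : Edge) ≠ (c, d) := by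
      intro e; rw [Prod.mk.injEq] at e; unfold cr at c1; omega
    have n2 : ((a, b) : Edge) ≠ (u, v) := by
      intro e; rw [Prod.mk.injEq] at e; unfold cr at c2; omega
    have n3 : ((c, d) : Edge) ≠ (u, v) := by
      intro e; rw [Prod.mk.injEq] at e; unfold cr at c3; omega
    have v1 := hv _ h1
    have v2 := hv _ h2
    have v3 := hv _ h3
    have C1 := (crosses_iff v1 v2).2 c1
    have C2 := (crosses_iff v1 v3).2 c2
    have C3 := (crosses_iff v2 v3).2 c3
    have C1' := (crosses_iff v2 v1).2 (cr_symm c1)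
    have C2' := (crosses_iff v3 v1).2 (cr_symm c2)
    have C3' := (crosses_iff v3 v2).2 (cr_symm c3)
    refine ⟨{(a, b), (c, d), (u, v)}, ?_, ?_, ?_⟩
    · intro e he
      simp only [Finset.coe_insert, Finset.coe_singleton, Set.mem_insert_iff,
        Set.mem_singleton_iff] at he
      rcases he with rfl | rfl | rfl <;> assumption
    · exact Finset.card_eq_three.2 ⟨_, _, _, n1, n2, n3, rfl⟩
    · intro e he f hf hne
      simp only [Finset.mem_insert, Finset.mem_singleton] at he hf
      rcases he with rfl | rfl | rfl <;> rcases hf with rfl | rfl | rfl <;>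
        first | assumption | exact absurd rfl hne
  · rintro h ⟨S, hS, hc, hx⟩
    obtain ⟨⟨a, b⟩, ⟨c, d⟩, ⟨u, v⟩, n1, n2, n3, rfl⟩ := Finset.card_eq_three.1 hc
    have h1 : (a, b) ∈ T := hS (by simp)
    have h2 : (c, d) ∈ T := hS (by simp)
    have h3 : (u, v) ∈ T := hS (by simp)
    exact h a b c d u v h1 h2 h3
      ((crosses_iff (hv _ h1) (hv _ h2)).1 (hx _ (by simp) _ (by simp) n1))
      ((crosses_iff (hv _ h1) (hv _ h3)).1 (hx _ (by simp) _ (by simp) n2))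
      ((crosses_iff (hv _ h2) (hv _ h3)).1 (hx _ (by simp) _ (by simp) n3))

/-- Periodicity under all multiples of `n`. -/
lemma Periodic.all {n : ℕ} {T : Set Edge} (hp : Periodic n T) (t : ℤ) (a b : ℤ) :
    (a, b) ∈ T ↔ (a + n * t, b + n * t) ∈ T := by
  induction t using Int.induction_on with
  | zero => simp
  | succ i ih =>
    rw [ih, hp]; unfold shift
    simp only [show a + (n : ℤ) * i + n = a + n * (i + 1) by ring,
      show b + (n : ℤ) * i + n = b + n * (i + 1) by ring]
  | pred i ih =>
    rw [ih, hp (a + n * (-(i : ℤ) - 1), _)]; unfold shift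
    simp only [show a + (n : ℤ) * (-i - 1) + n = a + n * (-i) by ring,
      show b + (n : ℤ) * (-i - 1) + n = b + n * (-i) by ring]

lemma Periodic.mem {n : ℕ} {T : Set Edge} (hp : Periodic n T) (t : ℤ) {a b a' b' : ℤ}
    (h : (a, b) ∈ T) (ha : a' = a + n * t) (hb : b' = b + n * t) : (a', b') ∈ T := by
  subst ha hb; exact (hp.all t a b).1 h

/-- All edges of a periodic 3-crossing-free set have length at most `2n`. -/
lemma length_le {n : ℕ} (hn : 1 ≤ n) {T : Set Edge} (hp : Periodic n T) (hc : NC T)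
    {a b : ℤ} (h : (a, b) ∈ T) : b ≤ a + 2 * n := by
  by_contra hlt
  refine hc a b (a + n) (b + n) (a + 2 * n) (b + 2 * n) h
    (hp.mem 1 h (by ring) (by ring)) (hp.mem 2 h (by ring) (by ring)) ?_ ?_ ?_ <;>
  · unfold cr; omega

/-- Weakly addable: `[p,q]` is in no 3-crossing with two edges of `T`. -/
def Weak (T : Set Edge) (p q : ℤ) : Prop := ∀ c d u v : ℤ, (c, d) ∈ T → (u, v) ∈ T →
  cr p q c d → cr p q u v → cr c d u v → False

lemma Weak.shift {n : ℕ} {T : Set Edge} (hp : Periodic n T) {p q : ℤ} (hw : Weak T p q) (t : ℤ) :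
    Weak T (p + n * t) (q + n * t) := by
  intro c d u v h1 h2 c1 c2 c3
  refine hw (c - n * t) (d - n * t) (u - n * t) (v - n * t)
    (hp.mem (-t) h1 (by ring) (by ring)) (hp.mem (-t) h2 (by ring) (by ring)) ?_ ?_ ?_ <;>
  · unfold cr at *; omega

/-- If `[p,q]` is weakly addable and no edge of `T` crosses both `[p,q]` and `[p+n,q+n]` while
these two cross, then `[p,q]` belongs to the triangulation `T`. -/
lemma mem_of_add {n : ℕ} {T : Set Edge} (hT : IsTriangulation n 2 T) {p q : ℤ} (hpq : p < q)
    (hq : q ≤ p + 2 * n) (hw : Weak T p q)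
    (hs : ∀ c d, (c, d) ∈ T → cr p q c d → cr (p + n) (q + n) c d →
      cr p q (p + n) (q + n) → False) : (p, q) ∈ T := by
  obtain ⟨hv, hp, hc, hmax⟩ := hT
  rw [crossingFree_iff hv] at hc
  set O : Set Edge := {e | ∃ t : ℤ, e = (p + n * t, q + n * t)} with hO
  have hv' : ValidEdges (T ∪ O) := by
    rintro e (he | ⟨t, rfl⟩)
    · exact hv e he
    · simp only; omega
  have hp' : Periodic n (T ∪ O) := by
    intro e
    have h1 := hp e
    have h2 : e ∈ O ↔ Multitriangulation.shift e n ∈ O := by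
      rcases e with ⟨x, y⟩
      unfold Multitriangulation.shift
      simp only [hO, Set.mem_ofPred_eq, Prod.mk.injEq]
      constructor
      · rintro ⟨t, h, h'⟩
        exact ⟨t + 1, by rw [h]; ring, by rw [h']; ring⟩
      · rintro ⟨t, h, h'⟩
        exact ⟨t - 1, by linarith, by linarith⟩
    rw [Set.mem_union, Set.mem_union, h1, h2]
  -- two orbit elements
  have close : ∀ t s : ℤ, cr (p + n * t) (q + n * t) (p + n * s) (q + n * s) →
      s = t + 1 ∨ t = s + 1 := by
    intro t s h
    by_contra hne
    have : s = t ∨ t + 2 ≤ s ∨ s + 2 ≤ t := by omega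
    have hn0 : (0 : ℤ) ≤ n := by positivity
    rcases this with rfl | h' | h'
    · unfold cr at h; omega
    · have : (n : ℤ) * (t + 2) ≤ n * s := mul_le_mul_of_nonneg_left h' hn0
      rw [mul_add] at this
      unfold cr at h; omega
    · have : (n : ℤ) * (s + 2) ≤ n * t := mul_le_mul_of_nonneg_left h' hn0
      rw [mul_add] at this
      unfold cr at h; omega
  have two' : ∀ t : ℤ, ∀ c d, (c, d) ∈ T →
      cr (p + n * t) (q + n * t) (p + n * (t + 1)) (q + n * (t + 1)) →
      cr (p + n * t) (q + n * t) c d → cr (p + n * (t + 1)) (q + n * (t + 1)) c d → False := by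
    intro t c d h c1 c2 c3
    rw [mul_add] at c1 c3
    refine hs (c - n * t) (d - n * t) (hp.mem (-t) h (by ring) (by ring)) ?_ ?_ ?_ <;>
    · unfold cr at *; omega
  have two : ∀ t s : ℤ, ∀ c d, (c, d) ∈ T →
      cr (p + n * t) (q + n * t) (p + n * s) (q + n * s) →
      cr (p + n * t) (q + n * t) c d → cr (p + n * s) (q + n * s) c d → False := by
    intro t s c d h c1 c2 c3
    rcases close t s c1 with rfl | rfl
    · exact two' _ _ _ h c1 c2 c3
    · exact two' _ _ _ h (cr_symm c1) c3 c2
  have one : ∀ t : ℤ, Weak T (p + n * t) (q + n * t) := fun t => hw.shift hp t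
  have hc' : CrossingFree 3 (T ∪ O) := by
    rw [crossingFree_iff hv']
    rintro a b c d u v (h1 | ⟨t, h1⟩) (h2 | ⟨s, h2⟩) (h3 | ⟨r, h3⟩) c1 c2 c3 <;>
      try simp only [Prod.mk.injEq] at h1 h2 h3
    · exact hc _ _ _ _ _ _ h1 h2 h3 c1 c2 c3
    · obtain ⟨rfl, rfl⟩ := h3
      exact one r _ _ _ _ h1 h2 (cr_symm c2) (cr_symm c3) c1
    · obtain ⟨rfl, rfl⟩ := h2
      exact one s _ _ _ _ h1 h3 (cr_symm c1) c3 c2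
    · obtain ⟨rfl, rfl⟩ := h2
      obtain ⟨rfl, rfl⟩ := h3
      exact two s r _ _ h1 c3 (cr_symm c1) (cr_symm c2)
    · obtain ⟨rfl, rfl⟩ := h1
      exact one t _ _ _ _ h2 h3 c1 c2 c3
    · obtain ⟨rfl, rfl⟩ := h1
      obtain ⟨rfl, rfl⟩ := h3
      exact two t r _ _ h2 c2 c1 (cr_symm c3)
    · obtain ⟨rfl, rfl⟩ := h1
      obtain ⟨rfl, rfl⟩ := h2
      exact two t s _ _ h3 c1 c2 c3
    · obtain ⟨rfl, rfl⟩ := h1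
      obtain ⟨rfl, rfl⟩ := h2
      obtain ⟨rfl, rfl⟩ := h3
      have := close _ _ c1
      have := close _ _ c2
      have := close _ _ c3
      omega
  rw [← hmax _ hv' hp' hc' Set.subset_union_left]
  exact Or.inr ⟨0, by simp⟩

/-- Key combinatorial step: the edge `[p,p+n]` is weakly addable. -/
lemma weak_short {n : ℕ} (hn : 1 ≤ n) {T : Set Edge} (hv : ValidEdges T) (hp : Periodic n T)
    (hc : NC T) {p q c d : ℤ} (hw : Weak T p q) (hq1 : p + n < q) (hq2 : q < p + 2 * n)
    (hf : (c, d) ∈ T) (hc1 : p < c) (hc2 : c < p + n) (hd1 : q < d) (hd2 : d ≤ c + n) :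
    Weak T p (p + n) := by
  have hw1 : Weak T (p + n) (q + n) := by simpa using hw.shift hp 1
  have hw1' : Weak T (p - n) (q - n) := by simpa [sub_eq_add_neg] using hw.shift hp (-1)
  -- both to the right
  have RR : ∀ x y x' y' : ℤ, (x, y) ∈ T → (x', y') ∈ T → p < x → x < x' → x' < p + n →
      p + n < y → y < y' → False := by
    intro x y x' y' hg hh h1 h2 h3 h4 h5
    have lg := length_le hn hp hc hg
    have lh := length_le hn hp hc hh
    have a1 : y ≤ q := by
      by_contra
      exact hw _ _ _ _ hg hh (by unfold cr; omega) (by unfold cr; omega) (by unfold cr; omega)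
    have a2 : q + n ≤ y' := by
      by_contra
      exact hw1 _ _ _ _ hg hh (by unfold cr; omega) (by unfold cr; omega) (by unfold cr; omega)
    have a3 : x' ≤ c := by
      by_contra
      exact hw _ _ _ _ hf hh (by unfold cr; omega) (by unfold cr; omega) (by unfold cr; omega)
    exact hw1 _ _ _ _ hf hg (by unfold cr; omega) (by unfold cr; omega) (by unfold cr; omega)
  -- both to the left
  have LL : ∀ x y x' y' : ℤ, (x, y) ∈ T → (x', y') ∈ T → x < x' → x' < p → p < y → y < y' →
      y' < p + n → False := by
    intro x y x' y' hg hh h1 h2 h3 h4 h5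
    exact hw _ _ _ _ hg hh (by unfold cr; omega) (by unfold cr; omega) (by unfold cr; omega)
  -- one on either side
  have RL : ∀ x y Y X : ℤ, (x, y) ∈ T → (Y, X) ∈ T → p < x → x < p + n → p + n < y → Y < p →
      p < X → X < p + n → x < X → False := by
    intro x0 y0 Y0 X0 hg0 hh0 h1 h2 h3 h4 h5 h6 h7
    obtain ⟨x, rfl⟩ : ∃ x, x0 = x - n := ⟨x0 + n, by ring⟩
    obtain ⟨y, rfl⟩ : ∃ y, y0 = y - n := ⟨y0 + n, by ring⟩
    obtain ⟨X, rfl⟩ : ∃ x, X0 = x - n := ⟨X0 + n, by ring⟩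
    obtain ⟨Y, rfl⟩ : ∃ y, Y0 = y - n := ⟨Y0 + n, by ring⟩
    have hg : (x, y) ∈ T := hp.mem 1 hg0 (by ring) (by ring)
    have hh : (Y, X) ∈ T := hp.mem 1 hh0 (by ring) (by ring)
    have lg := length_le hn hp hc hg
    have lh := length_le hn hp hc hh
    have a1 : y ≤ q + n := by
      by_contra
      exact hw1 _ _ _ _ hg hh (by unfold cr; omega) (by unfold cr; omega) (by unfold cr; omega)
    have a2 : q ≤ x := by
      by_contra
      exact hw _ _ _ _ hf hg (by unfold cr; omega) (by unfold cr; omega) (by unfold cr; omega)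
    have a3 : X ≤ c + n := by
      by_contra
      exact hw _ _ _ _ hf hh0 (by unfold cr; omega) (by unfold cr; omega) (by unfold cr; omega)
    exact hw1 _ _ _ _ hf hg0 (by unfold cr; omega) (by unfold cr; omega) (by unfold cr; omega)
  intro a b u v h1 h2 c1 c2 c3
  have v1 := hv _ h1
  have v2 := hv _ h2
  simp only at v1 v2
  unfold cr at c1 c2 c3
  rcases c1 with c1 | c1 <;> rcases c2 with c2 | c2 <;> rcases c3 with c3 | c3
  · exact RR _ _ _ _ h1 h2 (by omega) (by omega) (by omega) (by omega) (by omega)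
  · exact RR _ _ _ _ h2 h1 (by omega) (by omega) (by omega) (by omega) (by omega)
  · omega
  · exact RL _ _ _ _ h1 h2 (by omega) (by omega) (by omega) (by omega) (by omega) (by omega)
      (by omega)
  · exact RL _ _ _ _ h2 h1 (by omega) (by omega) (by omega) (by omega) (by omega) (by omega)
      (by omega)
  · omega
  · exact LL _ _ _ _ h1 h2 (by omega) (by omega) (by omega) (by omega) (by omega)
  · exact LL _ _ _ _ h2 h1 (by omega) (by omega) (by omega) (by omega) (by omega)

/-- Weakly addable edges belong to a periodic triangulation. -/
lemma mem_of_weak {n : ℕ} (hn : 1 ≤ n) {T : Set Edge} (hT : IsTriangulation n 2 T) {p q : ℤ}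
    (hpq : p < q) (hq : q ≤ p + 2 * n) (hw : Weak T p q) : (p, q) ∈ T := by
  refine mem_of_add hT hpq hq hw ?_
  have hT' := hT
  obtain ⟨hv, hp, hc, hmax⟩ := hT'
  rw [crossingFree_iff hv] at hc
  intro c d hf c1 c2 c3
  have vf : c < d := hv _ hf
  have lf := length_le hn hp hc hf
  have hfp : (c + n, d + n) ∈ T := hp.mem 1 hf (by ring) (by ring)
  have hfm : (c - n, d - n) ∈ T := hp.mem (-1) hf (by ring) (by ring)
  have key1 : ¬ (cr p q (c + n) (d + n) ∧ cr c d (c + n) (d + n)) :=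
    fun h => hw _ _ _ _ hf hfp c1 h.1 h.2
  have key2 : ¬ (cr p q (c - n) (d - n) ∧ cr c d (c - n) (d - n)) :=
    fun h => hw _ _ _ _ hf hfm c1 h.1 h.2
  have hcd : p < c ∧ c < p + n ∧ q < d ∧ d ≤ c + n ∧ p + n < q ∧ q < p + 2 * n := by
    unfold cr at *; omega
  obtain ⟨g1, g2, g3, g4, g5, g6⟩ := hcd
  have hshort : (p, p + n) ∈ T := by
    refine mem_of_add hT (by omega) (by omega)
      (weak_short hn hv hp hc hw g5 g6 hf g1 g2 g3 g4) ?_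
    intro _ _ _ _ _ h
    unfold cr at h; omega
  have hs1 : (p + n, p + n + n) ∈ T := hp.mem 1 hshort (by ring) (by ring)
  exact hw _ _ _ _ hf hs1 c1 (by unfold cr; omega) (by unfold cr; omega)

/-! ### Cyclic triples -/

lemma no_cyclic_aux {n : ℕ} {T : Set Edge} (hp : Periodic n T) (hc : NC T)
    {a b c d u v : ℤ} (h1 : (a, b) ∈ T) (h2 : (c, d) ∈ T) (h3 : (u, v) ∈ T)
    (l1 : b ≤ a + 2 * n) (hl2 : d - c ≤ b - a) (hl3 : v - u ≤ b - a)
    (c1 : a < c ∧ c < b ∧ b < d) (c2 : c < u ∧ u < d ∧ d < v)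
    (c3 : u < a + 4 * n ∧ a + 4 * n < v ∧ v < b + 4 * n) : False := by
  have ha : (a + n, b + n) ∈ T := hp.mem 1 h1 (by ring) (by ring)
  have ha' : (a - n, b - n) ∈ T := hp.mem (-1) h1 (by ring) (by ring)
  have hu : (u - 4 * n, v - 4 * n) ∈ T := hp.mem (-4) h3 (by ring) (by ring)
  have k1 : ¬ (cr a b (a + n) (b + n) ∧ cr c d (a + n) (b + n)) :=
    fun h => hc _ _ _ _ _ _ h1 h2 ha (Or.inl c1) h.1 h.2
  have k2 : ¬ (cr a b (a - n) (b - n) ∧ cr (u - 4 * n) (v - 4 * n) (a - n) (b - n)) :=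
    fun h => hc _ _ _ _ _ _ h1 hu ha' (by unfold cr; omega) h.1 h.2
  unfold cr at k1 k2
  omega

lemma no_cyclic {n : ℕ} (hn : 1 ≤ n) {T : Set Edge} (hp : Periodic n T) (hc : NC T)
    {a b c d u v : ℤ} (h1 : (a, b) ∈ T) (h2 : (c, d) ∈ T) (h3 : (u, v) ∈ T)
    (c1 : a < c ∧ c < b ∧ b < d) (c2 : c < u ∧ u < d ∧ d < v)
    (c3 : u < a + 4 * n ∧ a + 4 * n < v ∧ v < b + 4 * n) : False := by
  have l1 := length_le hn hp hc h1
  have l2 := length_le hn hp hc h2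
  have l3 := length_le hn hp hc h3
  have h1' : (a + 4 * n, b + 4 * n) ∈ T := hp.mem 4 h1 (by ring) (by ring)
  have h2' : (c + 4 * n, d + 4 * n) ∈ T := hp.mem 4 h2 (by ring) (by ring)
  have : (d - c ≤ b - a ∧ v - u ≤ b - a) ∨ (b - a ≤ d - c ∧ v - u ≤ d - c) ∨
    (b - a ≤ v - u ∧ d - c ≤ v - u) := by omega
  rcases this with ⟨x, y⟩ | ⟨x, y⟩ | ⟨x, y⟩
  · exact no_cyclic_aux hp hc h1 h2 h3 l1 x y c1 c2 c3
  · exact no_cyclic_aux hp hc h2 h3 h1' l2 y (by omega) c2 c3 (by omega)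
  · exact no_cyclic_aux hp hc h3 h1' h2' l3 (by omega) (by omega) c3 (by omega) (by omega)

/-- Three edges pairwise crossing modulo `4n` cannot occur. -/
lemma no_mod_triple {n : ℕ} (hn : 1 ≤ n) {T : Set Edge} (hv : ValidEdges T) (hp : Periodic n T)
    (hc : NC T) {a b c d u v t : ℤ} (h1 : (a, b) ∈ T) (h2 : (c, d) ∈ T) (h3 : (u, v) ∈ T)
    (c1 : cr a b c d) (c2 : cr a b u v) (c3 : cr c d (u + 4 * n * t) (v + 4 * n * t)) :
    False := by
  have l1 := length_le hn hp hc h1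
  have l2 := length_le hn hp hc h2
  have l3 := length_le hn hp hc h3
  have v1 := hv _ h1
  have v2 := hv _ h2
  have v3 := hv _ h3
  simp only at v1 v2 v3
  have ht : t = 0 ∨ t = 1 ∨ t = -1 ∨ 2 ≤ t ∨ t ≤ -2 := by omega
  rcases ht with rfl | rfl | rfl | ht | ht
  · exact hc _ _ _ _ _ _ h1 h2 h3 c1 c2 (by simpa using c3)
  · have h3' : (u + 4 * n, v + 4 * n) ∈ T := hp.mem 4 h3 (by ring) (by ring)
    unfold cr at c1 c2 c3
    exact no_cyclic hn hp hc h1 h2 h3' (by omega) (by omega) (by omega)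
  · have h2' : (c + 4 * n, d + 4 * n) ∈ T := hp.mem 4 h2 (by ring) (by ring)
    unfold cr at c1 c2 c3
    exact no_cyclic hn hp hc h1 h3 h2' (by omega) (by omega) (by omega)
  · have : (4 * n : ℤ) * 2 ≤ 4 * n * t := mul_le_mul_of_nonneg_left ht (by positivity)
    unfold cr at c1 c2 c3
    omega
  · have : (4 * n : ℤ) * t ≤ 4 * n * (-2) := mul_le_mul_of_nonneg_left ht (by positivity)
    unfold cr at c1 c2 c3
    omega

/-! ### The polygon -/

lemma polyCrosses_mk {m : ℕ} (x y z w : ZMod m) :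
    PolyCrosses s(x, y) s(z, w) ↔ crossIndex x.val y.val z.val w.val := by
  constructor
  · rintro ⟨x', y', z', w', h1, h2, h⟩
    rw [Sym2.eq_iff] at h1 h2
    unfold crossIndex at *
    rcases h1 with ⟨rfl, rfl⟩ | ⟨rfl, rfl⟩ <;> rcases h2 with ⟨rfl, rfl⟩ | ⟨rfl, rfl⟩ <;> omega
  · exact fun h => ⟨x, y, z, w, rfl, rfl, h⟩

lemma polyCrosses_symm {m : ℕ} {e f : Sym2 (ZMod m)} (h : PolyCrosses e f) : PolyCrosses f e := by
  obtain ⟨x, y, z, w, h1, h2, h⟩ := h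
  exact ⟨z, w, x, y, h2, h1, h.symm⟩

lemma polyCrosses_ne {m : ℕ} {e f : Sym2 (ZMod m)} (h : PolyCrosses e f) : e ≠ f := by
  rintro rfl
  induction e using Sym2.ind with
  | _ x y =>
    rw [polyCrosses_mk] at h
    unfold crossIndex at h
    omega

lemma polyFree_iff {m : ℕ} {T : Set (Sym2 (ZMod m))} : PolyCrossingFree 3 T ↔
    ∀ e f g, e ∈ T → f ∈ T → g ∈ T → PolyCrosses e f → PolyCrosses e g → PolyCrosses f g →
      False := by
  classical
  constructor
  · intro h e f g h1 h2 h3 c1 c2 c3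
    apply h
    have c1' := polyCrosses_symm c1
    have c2' := polyCrosses_symm c2
    have c3' := polyCrosses_symm c3
    refine ⟨{e, f, g}, ?_, ?_, ?_⟩
    · intro x hx
      simp only [Finset.coe_insert, Finset.coe_singleton, Set.mem_insert_iff,
        Set.mem_singleton_iff] at hx
      rcases hx with rfl | rfl | rfl <;> assumption
    · exact Finset.card_eq_three.2
        ⟨_, _, _, polyCrosses_ne c1, polyCrosses_ne c2, polyCrosses_ne c3, rfl⟩
    · intro x hx y hy hne
      simp only [Finset.mem_insert, Finset.mem_singleton] at hx hy
      rcases hx with rfl | rfl | rfl <;> rcases hy with rfl | rfl | rfl <;>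
        first | assumption | exact absurd rfl hne
  · rintro h ⟨S, hS, hc, hx⟩
    obtain ⟨e, f, g, n1, n2, n3, rfl⟩ := Finset.card_eq_three.1 hc
    exact h e f g (hS (by simp)) (hS (by simp)) (hS (by simp))
      (hx _ (by simp) _ (by simp) n1) (hx _ (by simp) _ (by simp) n2)
      (hx _ (by simp) _ (by simp) n3)

/-- Decomposition of an integer into residue and multiple of `4n`. -/
lemma val_spec {n : ℕ} (hn : 1 ≤ n) (a : ℤ) : ∃ i : ℤ,
    a = (((a : ZMod (4 * n)).val : ℕ) : ℤ) + 4 * n * i ∧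
    (((a : ZMod (4 * n)).val : ℕ) : ℤ) < 4 * n := by
  have : NeZero (4 * n) := ⟨by omega⟩
  have h := ZMod.val_intCast (n := 4 * n) a
  have h2 := ZMod.val_lt (a : ZMod (4 * n))
  refine ⟨a / (4 * n), ?_, by omega⟩
  rw [h]
  push_cast
  exact (Int.emod_add_mul_ediv a _).symm

/-- If two decompositions differ by less than a period, quotients differ by at most one. -/
lemma quot_cases {n p q i j : ℤ} (hn : 0 < n) (hp : 0 ≤ p) (hp' : p < 4 * n) (hq : 0 ≤ q)
    (hq' : q < 4 * n)
    (h1 : p + 4 * n * i < q + 4 * n * j) (h2 : q + 4 * n * j < p + 4 * n * i + 4 * n) :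
    4 * n * j = 4 * n * i ∨ 4 * n * j = 4 * n * i + 4 * n := by
  have : j = i ∨ j = i + 1 := by
    by_contra hne
    have : j + 1 ≤ i ∨ i + 2 ≤ j := by omega
    rcases this with h | h
    · have : 4 * n * (j + 1) ≤ 4 * n * i := mul_le_mul_of_nonneg_left h (by omega)
      rw [mul_add] at this; omega
    · have : 4 * n * (i + 2) ≤ 4 * n * j := mul_le_mul_of_nonneg_left h (by omega)
      rw [mul_add] at this; omega
  rcases this with rfl | rfl
  · left; rfl
  · right; ring

lemma proj_cross {n : ℕ} (hn : 1 ≤ n) {a b c d : ℤ} (h1 : a < c) (h2 : c < b) (h3 : b < d)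
    (h4 : d < a + 4 * n) :
    PolyCrosses (m := 4 * n) s((a : ZMod (4 * n)), (b : ZMod (4 * n)))
      s((c : ZMod (4 * n)), (d : ZMod (4 * n))) := by
  rw [polyCrosses_mk]
  obtain ⟨i, ha, ha'⟩ := val_spec hn a
  obtain ⟨j, hb, hb'⟩ := val_spec hn b
  obtain ⟨k, hc, hc'⟩ := val_spec hn c
  obtain ⟨l, hd, hd'⟩ := val_spec hn d
  generalize (a : ZMod (4 * n)).val = p at *
  generalize (b : ZMod (4 * n)).val = q at *
  generalize (c : ZMod (4 * n)).val = r at *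
  generalize (d : ZMod (4 * n)).val = s at *
  have e1 := quot_cases (n := n) (p := p) (q := q) (i := i) (j := j) (by omega) (by omega) ha'
    (by omega) hb' (by omega) (by omega)
  have e2 := quot_cases (n := n) (p := p) (q := r) (i := i) (j := k) (by omega) (by omega) ha'
    (by omega) hc' (by omega) (by omega)
  have e3 := quot_cases (n := n) (p := p) (q := s) (i := i) (j := l) (by omega) (by omega) ha'
    (by omega) hd' (by omega) (by omega)
  unfold crossIndex
  generalize (4 * n * i : ℤ) = I at *
  generalize (4 * n * j : ℤ) = J at *
  generalize (4 * n * k : ℤ) = K at *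
  generalize (4 * n * l : ℤ) = L at *
  rcases e1 with rfl | rfl <;> rcases e2 with rfl | rfl <;> rcases e3 with rfl | rfl <;> omega

lemma proj_cr {n : ℕ} (hn : 1 ≤ n) {a b c d : ℤ} (h : cr a b c d) (h1 : b ≤ a + 2 * n)
    (h2 : d ≤ c + 2 * n) :
    PolyCrosses (m := 4 * n) s((a : ZMod (4 * n)), (b : ZMod (4 * n)))
      s((c : ZMod (4 * n)), (d : ZMod (4 * n))) := by
  rcases h with h | h
  · exact proj_cross hn h.1 h.2.1 h.2.2 (by omega)
  · exact polyCrosses_symm (proj_cross hn h.1 h.2.1 h.2.2 (by omega))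

lemma lift_cr {n : ℕ} (hn : 1 ≤ n) {a b c d : ℤ} (hab : a < b) (hab' : b < a + 4 * n)
    (hcd : c < d) (hcd' : d < c + 4 * n)
    (h : PolyCrosses (m := 4 * n) s((a : ZMod (4 * n)), (b : ZMod (4 * n)))
      s((c : ZMod (4 * n)), (d : ZMod (4 * n)))) :
    ∃ t : ℤ, cr a b (c + 4 * n * t) (d + 4 * n * t) := by
  rw [polyCrosses_mk] at h
  obtain ⟨i, ha, ha'⟩ := val_spec hn a
  obtain ⟨j, hb, hb'⟩ := val_spec hn b
  obtain ⟨k, hc, hc'⟩ := val_spec hn c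
  obtain ⟨l, hd, hd'⟩ := val_spec hn d
  generalize (a : ZMod (4 * n)).val = p at *
  generalize (b : ZMod (4 * n)).val = q at *
  generalize (c : ZMod (4 * n)).val = r at *
  generalize (d : ZMod (4 * n)).val = s at *
  have e1 := quot_cases (n := n) (p := p) (q := q) (i := i) (j := j) (by omega) (by omega) ha'
    (by omega) hb' (by omega) (by omega)
  have e2 := quot_cases (n := n) (p := r) (q := s) (i := k) (j := l) (by omega) (by omega) hc'
    (by omega) hd' (by omega) (by omega)
  have key : cr a b (c + 4 * n * (i - k)) (d + 4 * n * (i - k)) ∨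
      cr a b (c + 4 * n * (i - k + 1)) (d + 4 * n * (i - k + 1)) ∨
      cr a b (c + 4 * n * (i - k - 1)) (d + 4 * n * (i - k - 1)) := by
    have r1 : (4 * n * (i - k) : ℤ) = 4 * n * i - 4 * n * k := by ring
    have r2 : (4 * n * (i - k + 1) : ℤ) = 4 * n * i - 4 * n * k + 4 * n := by ring
    have r3 : (4 * n * (i - k - 1) : ℤ) = 4 * n * i - 4 * n * k - 4 * n := by ring
    rw [r1, r2, r3]
    unfold crossIndex at h
    unfold cr
    generalize (4 * n * i : ℤ) = I at *
    generalize (4 * n * j : ℤ) = J at *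
    generalize (4 * n * k : ℤ) = K at *
    generalize (4 * n * l : ℤ) = L at *
    clear r1 r2 r3
    rcases e1 with rfl | rfl <;> rcases e2 with rfl | rfl <;> omega
  rcases key with h | h | h
  exacts [⟨_, h⟩, ⟨_, h⟩, ⟨_, h⟩]

/-! ### The projection -/

lemma phi_free {n : ℕ} (hn : 1 ≤ n) {T : Set Edge} (hv : ValidEdges T) (hp : Periodic n T)
    (hc : NC T) : PolyCrossingFree 3 (phi n T) := by
  rw [polyFree_iff]
  rintro _ _ _ ⟨⟨a, b⟩, h1, rfl⟩ ⟨⟨c, d⟩, h2, rfl⟩ ⟨⟨u, v⟩, h3, rfl⟩ c1 c2 c3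
  have l1 := length_le hn hp hc h1
  have l2 := length_le hn hp hc h2
  have l3 := length_le hn hp hc h3
  have v1 : a < b := hv _ h1
  have v2 : c < d := hv _ h2
  have v3 : u < v := hv _ h3
  obtain ⟨t, k1⟩ := lift_cr hn v1 (by omega) v2 (by omega) c1
  obtain ⟨s, k2⟩ := lift_cr hn v1 (by omega) v3 (by omega) c2
  obtain ⟨r, k3⟩ := lift_cr hn v2 (by omega) v3 (by omega) c3
  refine no_mod_triple (t := r + t - s) hn hv hp hc h1 (hp.mem (4 * t) h2 rfl rfl)
    (hp.mem (4 * s) h3 rfl rfl) ?_ ?_ ?_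
  · convert k1 using 1 <;> ring
  · convert k2 using 1 <;> ring
  · have e1 : (4 * n * (r + t - s) : ℤ) = 4 * n * r + 4 * n * t - 4 * n * s := by ring
    have e2 : (n * (4 * t) : ℤ) = 4 * n * t := by ring
    have e3 : (n * (4 * s) : ℤ) = 4 * n * s := by ring
    rw [e1, e2, e3]
    unfold cr at *
    omega

lemma phi_valid {n : ℕ} (hn : 1 ≤ n) {T : Set Edge} (hv : ValidEdges T) (hp : Periodic n T)
    (hc : NC T) : PolyValid (phi n T) := by
  rintro _ ⟨⟨a, b⟩, h, rfl⟩ hd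
  have l1 := length_le hn hp hc h
  have v1 : a < b := hv _ h
  rw [Sym2.mk_isDiag_iff] at hd
  simp only at hd
  rw [ZMod.intCast_eq_intCast_iff_dvd_sub] at hd
  have := Int.le_of_dvd (by omega) hd
  push_cast at this
  omega

lemma phi_periodic {n : ℕ} {T : Set Edge} (hp : Periodic n T) : PolyPeriodic n (phi n T) := by
  intro x
  constructor
  · rintro ⟨⟨a, b⟩, h, rfl⟩
    refine ⟨(a + n, b + n), hp.mem 1 h (by ring) (by ring), ?_⟩
    simp
  · rintro ⟨⟨a, b⟩, h, hx⟩
    refine ⟨(a - n, b - n), hp.mem (-1) h (by ring) (by ring), ?_⟩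
    apply Sym2.map.injective (f := (· + (n : ZMod (4 * n)))) (add_left_injective _)
    rw [hx]
    simp

/-- Every genuine polygon edge lifts to an integer edge of length at most `2n`. -/
lemma exists_lift {n : ℕ} (hn : 1 ≤ n) (e : Sym2 (ZMod (4 * n))) (he : ¬ e.IsDiag) :
    ∃ a b : ℤ, a < b ∧ b ≤ a + 2 * n ∧ e = s((a : ZMod (4 * n)), (b : ZMod (4 * n))) := by
  have : NeZero (4 * n) := ⟨by omega⟩
  have main : ∀ x y : ZMod (4 * n), x.val < y.val → ∃ a b : ℤ, a < b ∧ b ≤ a + 2 * n ∧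
      s(x, y) = s((a : ZMod (4 * n)), (b : ZMod (4 * n))) := by
    intro x y h
    have hy := ZMod.val_lt y
    have ex : ((x.val : ℤ) : ZMod (4 * n)) = x := by
      rw [Int.cast_natCast, ZMod.natCast_zmod_val]
    have ey : ((y.val : ℤ) : ZMod (4 * n)) = y := by
      rw [Int.cast_natCast, ZMod.natCast_zmod_val]
    by_cases hl : (y.val : ℤ) ≤ x.val + 2 * n
    · exact ⟨x.val, y.val, by omega, hl, by rw [ex, ey]⟩
    · refine ⟨y.val, x.val + ((4 * n : ℕ) : ℤ), by omega, by push_cast; omega, ?_⟩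
      rw [Int.cast_add, ex, ey, Int.cast_natCast, ZMod.natCast_self, add_zero, Sym2.eq_swap]
  induction e using Sym2.ind with
  | _ x y =>
    rw [Sym2.mk_isDiag_iff] at he
    have hne : x.val ≠ y.val := fun h => he (ZMod.val_injective _ h)
    rcases lt_or_gt_of_ne hne with h | h
    · exact main x y h
    · rw [Sym2.eq_swap]; exact main y x h

/-- Membership in `phi` reflects to membership upstairs for short edges. -/
lemma mem_of_phi {n : ℕ} (hn : 1 ≤ n) {T : Set Edge} (hv : ValidEdges T) (hp : Periodic n T)
    (hc : NC T) {a b : ℤ} (hab : a < b) (hab' : b ≤ a + 2 * n)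
    (h : s((a : ZMod (4 * n)), (b : ZMod (4 * n))) ∈ phi n T) : (a, b) ∈ T := by
  obtain ⟨⟨c, d⟩, hm, he⟩ := h
  have l1 := length_le hn hp hc hm
  have v1 : c < d := hv _ hm
  simp only [Sym2.eq_iff, ZMod.intCast_eq_intCast_iff_dvd_sub] at he
  push_cast at he
  have hn0 : (0 : ℤ) ≤ 4 * n := by positivity
  have small : ∀ z : ℤ, -(4 * n) < 4 * n * z → 4 * n * z < 4 * n → z = 0 := by
    intro z h1 h2
    by_contra hz
    have : z ≤ -1 ∨ 1 ≤ z := by omega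
    rcases this with h | h
    · have := mul_le_mul_of_nonneg_left h hn0
      omega
    · have := mul_le_mul_of_nonneg_left h hn0
      omega
  rcases he with ⟨⟨s, h1⟩, ⟨t, h2⟩⟩ | ⟨⟨s, h1⟩, ⟨t, h2⟩⟩
  · have e : (4 * n * (s - t) : ℤ) = 4 * n * s - 4 * n * t := by ring
    have := small (s - t) (by omega) (by omega)
    obtain rfl : s = t := by omega
    exact hp.mem (-4 * s) hm (by linarith) (by linarith)
  · have e : (4 * n * (s - t - 1) : ℤ) = 4 * n * s - 4 * n * t - 4 * n := by ring
    have := small (s - t - 1) (by omega) (by omega)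
    obtain rfl : s = t + 1 := by omega
    have e' : (4 * n * (t + 1) : ℤ) = 4 * n * t + 4 * n := by ring
    exact hp.mem (-4 * t - 2) hm (by linarith) (by linarith)

/-- `φ` restricts to a bijection between `n`-periodic
2-triangulations on `ℤ` (equivalently, 2-triangulations on the half-cylinder
with `n` marked points) and `n`-periodic 2-triangulations on the `4n`-gon
(those invariant under rotation by `π/2`, i.e. `v ↦ v + n`). -/
theorem phi_bijection (n : ℕ) (hn : 1 ≤ n) :
    Set.BijOn (phi n) {T : Set Edge | IsTriangulation n 2 T}
      {T' : Set (Sym2 (ZMod (4 * n))) | IsPolyTriangulation T' ∧ PolyPeriodic n T'} := by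
  refine ⟨?_, ?_, ?_⟩
  · intro T hT
    have hT' : IsTriangulation n 2 T := hT
    obtain ⟨hv, hp, hc, hmax⟩ := hT'
    rw [crossingFree_iff hv] at hc
    refine ⟨⟨phi_valid hn hv hp hc, phi_free hn hv hp hc, ?_⟩, phi_periodic hp⟩
    intro U hU hUc hsub
    refine Set.Subset.antisymm ?_ hsub
    intro e he
    obtain ⟨a, b, hab, hab', rfl⟩ := exists_lift hn e (hU e he)
    refine ⟨(a, b), mem_of_weak hn hT hab hab' ?_, rfl⟩
    intro c d u v h1 h2 c1 c2 c3
    have l1 := length_le hn hp hc h1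
    have l2 := length_le hn hp hc h2
    exact polyFree_iff.1 hUc _ _ _ he (hsub ⟨_, h1, rfl⟩) (hsub ⟨_, h2, rfl⟩)
      (proj_cr hn c1 hab' l1) (proj_cr hn c2 hab' l2) (proj_cr hn c3 l1 l2)
  · have half : ∀ T U : Set Edge, IsTriangulation n 2 T → IsTriangulation n 2 U →
        phi n T = phi n U → T ⊆ U := by
      rintro T U ⟨hv, hp, hc, -⟩ ⟨hv', hp', hc', -⟩ he ⟨a, b⟩ h
      rw [crossingFree_iff hv] at hc
      rw [crossingFree_iff hv'] at hc'
      refine mem_of_phi hn hv' hp' hc' (hv _ h) (length_le hn hp hc h) ?_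
      rw [← he]
      exact ⟨_, h, rfl⟩
    intro T hT U hU he
    exact Set.Subset.antisymm (half T U hT hU he) (half U T hU hT he.symm)
  · rintro U ⟨⟨hU, hUc, hUm⟩, hUp⟩
    set T : Set Edge := {e | e.1 < e.2 ∧ e.2 ≤ e.1 + 2 * n ∧
      s((e.1 : ZMod (4 * n)), (e.2 : ZMod (4 * n))) ∈ U} with hTdef
    have hv : ValidEdges T := fun e he => he.1
    have hp : Periodic n T := by
      rintro ⟨a, b⟩
      have := hUp s((a : ZMod (4 * n)), (b : ZMod (4 * n)))
      simp only [hTdef, shift, Set.mem_ofPred_eq]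
      rw [this]
      simp only [Sym2.map_mk, Int.cast_add, Int.cast_natCast]
      constructor
      · rintro ⟨h1, h2, h3⟩
        exact ⟨by omega, by omega, h3⟩
      · rintro ⟨h1, h2, h3⟩
        exact ⟨by omega, by omega, h3⟩
    have hc : NC T := by
      rintro a b c d u v ⟨-, l1, h1⟩ ⟨-, l2, h2⟩ ⟨-, l3, h3⟩ c1 c2 c3
      exact polyFree_iff.1 hUc _ _ _ h1 h2 h3 (proj_cr hn c1 l1 l2) (proj_cr hn c2 l1 l3)
        (proj_cr hn c3 l2 l3)
    have hphi : phi n T = U := by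
      ext e
      constructor
      · rintro ⟨⟨a, b⟩, h, rfl⟩
        exact h.2.2
      · intro he
        obtain ⟨a, b, hab, hab', rfl⟩ := exists_lift hn e (hU e he)
        exact ⟨(a, b), ⟨hab, hab', he⟩, rfl⟩
    refine ⟨T, ⟨hv, hp, (crossingFree_iff hv).2 hc, ?_⟩, hphi⟩
    intro V hVv hVp hVc hsub
    rw [crossingFree_iff hVv] at hVc
    refine Set.Subset.antisymm ?_ hsub
    have hle : U ⊆ phi n V := by
      rw [← hphi]
      rintro _ ⟨e, he, rfl⟩
      exact ⟨e, hsub he, rfl⟩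
    have hEq := hUm (phi n V) (phi_valid hn hVv hVp hVc) (phi_free hn hVv hVp hVc) hle
    rintro ⟨a, b⟩ h
    refine ⟨hVv _ h, length_le hn hVp hVc h, ?_⟩
    rw [← hEq]
    exact ⟨_, h, rfl⟩

end Multitriangulation
end

section
/- Let n ≥ 1 and let T be an n-periodic 2-triangulation on ℤ. Then the set of orbits of edges of T under translation by n (i.e., the quotient of T by the action e ↦ e+n) has exactly 2(2n−1) elements, of which exactly 2(n−1) are orbits of 2-relevant edges. -/
/- Edges on the universal cover of the half-cylinder, modeled by the integers.
   An edge is an unordered pair of distinct integers, represented as an ordered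
   pair `(a, b)` with `a < b` (validity). -/

namespace Multitriangulation

/-- The orbit of an edge under translation by multiples of `n`. -/
def orbitOf (n : ℕ) (e : Edge) : Set Edge := {f | ∃ t : ℤ, f = shift e (t * n)}

/-- `[a,b]` forms a 3-crossing with two edges of `E`. -/
def Bl (E : ℤ → ℤ → Prop) (a b : ℤ) : Prop :=
  ∃ c d c' d', E c d ∧ E c' d' ∧
    ((a < c ∧ c < c' ∧ c' < b ∧ b < d ∧ d < d') ∨
     (c < a ∧ a < c' ∧ c' < d ∧ d < b ∧ b < d') ∨
     (c < c' ∧ c' < a ∧ a < d ∧ d < d' ∧ d' < b))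

/-- The edge `[a,b]`, its translate by `N`, and an edge of `E` of length at most `N`
form a 3-crossing. -/
def Two (N : ℤ) (E : ℤ → ℤ → Prop) (a b : ℤ) : Prop :=
  ∃ c d, E c d ∧ a < c ∧ c < a + N ∧ a + N < b ∧ b < d ∧ d ≤ c + N

/-- Abstract form of the hypotheses on a periodic 2-triangulation. -/
structure Sys (N : ℤ) (E : ℤ → ℤ → Prop) : Prop where
  pos : 1 ≤ N
  lt : ∀ a b, E a b → a < b
  len : ∀ a b, E a b → b - a ≤ 2 * N
  up : ∀ a b, E a b → E (a + N) (b + N)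
  dn : ∀ a b, E a b → E (a - N) (b - N)
  free : ∀ a₁ a₂ a₃ b₁ b₂ b₃, E a₁ b₁ → E a₂ b₂ → E a₃ b₃ →
    a₁ < a₂ → a₂ < a₃ → a₃ < b₁ → b₁ < b₂ → b₂ < b₃ → False
  one : ∀ a, E a (a + 1)
  two : ∀ a, E a (a + 2)
  mx : ∀ a b, a < b → b - a ≤ 2 * N → ¬ E a b → Bl E a b ∨ Two N E a b

/-- Reflection. -/
def Ref (E : ℤ → ℤ → Prop) (a b : ℤ) : Prop := E (-b) (-a)

theorem bl_ref {E : ℤ → ℤ → Prop} {a b : ℤ} (h : Bl E (-b) (-a)) : Bl (Ref E) a b := by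
  obtain ⟨c, d, c', d', h1, h2, h⟩ := h
  refine ⟨-d', -c', -d, -c, by simpa [Ref] using h2, by simpa [Ref] using h1, ?_⟩
  omega

theorem two_ref {N : ℤ} {E : ℤ → ℤ → Prop} (dn : ∀ a b, E a b → E (a - N) (b - N))
    {a b : ℤ} (h : Two N E (-b) (-a)) : Two N (Ref E) a b := by
  obtain ⟨c, d, h1, h⟩ := h
  refine ⟨N - d, N - c, ?_, ?_⟩
  · have := dn _ _ h1
    unfold Ref
    convert this using 1 <;> ring
  · omega

theorem Sys.ref {N : ℤ} {E : ℤ → ℤ → Prop} (h : Sys N E) : Sys N (Ref E) where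
  pos := h.pos
  lt a b hab := by have := h.lt _ _ hab; omega
  len a b hab := by have := h.len _ _ hab; omega
  up a b hab := by
    have := h.dn _ _ hab
    unfold Ref
    convert this using 1 <;> ring
  dn a b hab := by
    have := h.up _ _ hab
    unfold Ref
    convert this using 1 <;> ring
  free a₁ a₂ a₃ b₁ b₂ b₃ h1 h2 h3 _ _ _ _ _ := by
    refine h.free _ _ _ _ _ _ h3 h2 h1 ?_ ?_ ?_ ?_ ?_ <;> omega
  one a := by
    have := h.one (-(a + 1))
    unfold Ref
    convert this using 1; ring
  two a := by
    have := h.two (-(a + 2))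
    unfold Ref
    convert this using 1; ring
  mx a b hab hl hE := by
    rcases h.mx (-b) (-a) (by omega) (by omega) hE with h1 | h1
    · exact Or.inl (bl_ref h1)
    · exact Or.inr (two_ref h.dn h1)

theorem bl_of_ref {E : ℤ → ℤ → Prop} {a b : ℤ} (h : Bl (Ref E) (-b) (-a)) : Bl E a b := by
  have := bl_ref h
  obtain ⟨c, d, c', d', h1, h2, h⟩ := this
  exact ⟨c, d, c', d', by simpa [Ref] using h1, by simpa [Ref] using h2, h⟩

/-- The edge from `α` to the cyclic coordinate `β` (points left of `p` are moved by `10 N`). -/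
def Fc (N : ℤ) (E : ℤ → ℤ → Prop) (p α β : ℤ) : Prop :=
  p < α ∧ α < p + 2 * N ∧ β < p + 10 * N ∧
    ((E α β ∧ β ≤ p + 4 * N) ∨ (E (β - 10 * N) α ∧ p + 8 * N < β))

theorem Sys.fc_right {N : ℤ} {E : ℤ → ℤ → Prop} (h : Sys N E) {p α β : ℤ}
    (h1 : p < α) (h2 : α < p + 2 * N) (he : E α β) : Fc N E p α β := by
  have := h.len _ _ he
  have := h.pos
  exact ⟨h1, h2, by omega, Or.inl ⟨he, by omega⟩⟩

theorem Sys.fc_left {N : ℤ} {E : ℤ → ℤ → Prop} (h : Sys N E) {p α β : ℤ}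
    (h1 : p < α) (h2 : α < p + 2 * N) (hb : β < p) (he : E β α) :
    Fc N E p α (β + 10 * N) := by
  have := h.len _ _ he
  have := h.pos
  exact ⟨h1, h2, by omega, Or.inr ⟨by simpa using he, by omega⟩⟩

theorem Sys.fc_free {N : ℤ} {E : ℤ → ℤ → Prop} (h : Sys N E) {p a₁ a₂ a₃ b₁ b₂ b₃ : ℤ}
    (h1 : Fc N E p a₁ b₁) (h2 : Fc N E p a₂ b₂) (h3 : Fc N E p a₃ b₃)
    (h12 : a₁ < a₂) (h23 : a₂ < a₃) (h31 : a₃ < b₁) (k12 : b₁ < b₂) (k23 : b₂ < b₃) :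
    False := by
  have hp := h.pos
  obtain ⟨u1, v1, w1, e1⟩ := h1
  obtain ⟨u2, v2, w2, e2⟩ := h2
  obtain ⟨u3, v3, w3, e3⟩ := h3
  rcases e1 with ⟨e1, f1⟩ | ⟨e1, f1⟩ <;> rcases e2 with ⟨e2, f2⟩ | ⟨e2, f2⟩ <;>
    rcases e3 with ⟨e3, f3⟩ | ⟨e3, f3⟩ <;> try omega
  · exact h.free _ _ _ _ _ _ e1 e2 e3 h12 h23 h31 k12 k23
  · refine h.free _ _ _ _ _ _ e3 e1 e2 ?_ ?_ ?_ ?_ ?_ <;> omega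
  · refine h.free _ _ _ _ _ _ e2 e3 e1 ?_ ?_ ?_ ?_ ?_ <;> omega
  · refine h.free _ _ _ _ _ _ e1 e2 e3 ?_ ?_ ?_ ?_ ?_ <;> omega

theorem Sys.fc_of_bl {N : ℤ} {E : ℤ → ℤ → Prop} (h : Sys N E) {p t : ℤ}
    (ht : t ≤ p + 2 * N) (hb : Bl E p t) :
    ∃ a b a' b', Fc N E p a b ∧ Fc N E p a' b' ∧ a < a' ∧ a' < t ∧ t < b ∧ b < b' := by
  have hp := h.pos
  obtain ⟨c, d, c', d', h1, h2, hh⟩ := hb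
  have l1 := h.len _ _ h1
  have l2 := h.len _ _ h2
  rcases hh with hh | hh | hh
  · exact ⟨c, d, c', d', h.fc_right (by omega) (by omega) h1,
      h.fc_right (by omega) (by omega) h2, by omega, by omega, by omega, by omega⟩
  · exact ⟨c', d', d, c + 10 * N, h.fc_right (by omega) (by omega) h2,
      h.fc_left (by omega) (by omega) (by omega) h1, by omega, by omega, by omega, by omega⟩
  · exact ⟨d, c + 10 * N, d', c' + 10 * N, h.fc_left (by omega) (by omega) (by omega) h1,
      h.fc_left (by omega) (by omega) (by omega) h2, by omega, by omega, by omega, by omega⟩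

theorem Sys.bl_of_fc {N : ℤ} {E : ℤ → ℤ → Prop} (h : Sys N E) {p t a b a' b' : ℤ}
    (ht : t ≤ p + 2 * N) (h1 : Fc N E p a b) (h2 : Fc N E p a' b')
    (k1 : a < a') (k2 : a' < t) (k3 : t < b) (k4 : b < b') : Bl E p t := by
  have hp := h.pos
  obtain ⟨u1, v1, w1, e1⟩ := h1
  obtain ⟨u2, v2, w2, e2⟩ := h2
  rcases e1 with ⟨e1, f1⟩ | ⟨e1, f1⟩ <;> rcases e2 with ⟨e2, f2⟩ | ⟨e2, f2⟩
  · exact ⟨_, _, _, _, e1, e2, by omega⟩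
  · exact ⟨_, _, _, _, e2, e1, by omega⟩
  · omega
  · exact ⟨_, _, _, _, e1, e2, by omega⟩

/-- The fan lemma. -/
theorem Sys.fan {N : ℤ} {E : ℤ → ℤ → Prop} (h : Sys N E) {p x B : ℤ}
    (hx : ¬ Bl E p x) (hB : B ≤ p + 2 * N + 1) (hxB : x + 1 < B)
    (hbl : ∀ t, x < t → t < B → Bl E p t) :
    ∃ a b b', Fc N E p a b ∧ Fc N E p x b' ∧ a < x ∧ B ≤ b ∧ b < b' := by
  have key : ∀ k : ℕ, x + 1 + k < B → ∃ a b b', Fc N E p a b ∧ Fc N E p x b' ∧ a < x ∧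
      x + 1 + k < b ∧ b < b' := by
    intro k
    induction k with
    | zero =>
      intro _
      obtain ⟨a, b, a', b', h1, h2, k1, k2, k3, k4⟩ :=
        h.fc_of_bl (by omega) (hbl (x + 1) (by omega) hxB)
      have : ¬ a' < x := fun hlt => hx (h.bl_of_fc (by omega) h1 h2 k1 hlt (by omega) k4)
      have : a' = x := by omega
      subst this
      exact ⟨a, b, b', h1, h2, k1, by simpa using k3, k4⟩
    | succ k ih =>
      intro hk
      push_cast at hk ⊢
      obtain ⟨a, b, b', h1, h2, k1, k2, k3⟩ := ih (by omega)
      by_cases hb : x + 1 + (k + 1) < b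
      · exact ⟨a, b, b', h1, h2, k1, hb, k3⟩
      have hbe : b = x + 1 + (k + 1) := by omega
      obtain ⟨c, d, c', d', g1, g2, m1, m2, m3, m4⟩ :=
        h.fc_of_bl (by omega) (hbl (x + 1 + (k + 1)) (by omega) hk)
      have hc' : ¬ c' < x := fun hlt => hx (h.bl_of_fc (by omega) g1 g2 m1 hlt (by omega) m4)
      have hc : c < x := by
        by_contra hcx
        exact h.fc_free h1 g1 g2 (by omega) m1 (by omega) (by omega) m4
      by_cases hd : d < b'
      · exact ⟨c, d, b', g1, h2, hc, m3, hd⟩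
      by_cases hcx : c' = x
      · subst hcx
        exact ⟨c, d, d', g1, g2, hc, m3, m4⟩
      · exact (h.fc_free h1 h2 g2 k1 (by omega) (by omega) k3 (by omega)).elim
  obtain ⟨a, b, b', h1, h2, k1, k2, k3⟩ := key (B - x - 2).toNat (by omega)
  exact ⟨a, b, b', h1, h2, k1, by omega, k3⟩

/-- The angle lemma (general form). -/
theorem Sys.angle0 {N : ℤ} {E : ℤ → ℤ → Prop} (h : Sys N E) {p x q : ℤ}
    (hx : ¬ Bl E p x) (hq : ¬ Bl E p q) (hql : q ≤ p + 2 * N) (hxq : x + 1 < q)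
    (hbl : ∀ t, x < t → t < q → Bl E p t) :
    ∃ a, p < a ∧ a < x ∧ E a q ∧ ∃ b, (E x b ∧ q < b) ∨ (E b x ∧ b < p) := by
  obtain ⟨a, b, b', h1, h2, k1, k2, k3⟩ := h.fan hx (by omega) hxq hbl
  have hb : ¬ q < b := fun hlt => hq (h.bl_of_fc hql h1 h2 k1 (by omega) hlt k3)
  have hbq : b = q := by omega
  subst hbq
  have hp := h.pos
  obtain ⟨u1, v1, w1, e1⟩ := h1
  obtain ⟨u2, v2, w2, e2⟩ := h2
  refine ⟨a, u1, k1, ?_, ?_⟩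
  · rcases e1 with e1 | e1
    · exact e1.1
    · omega
  · rcases e2 with e2 | e2
    · exact ⟨b', Or.inl ⟨e2.1, k3⟩⟩
    · exact ⟨b' - 10 * N, Or.inr ⟨e2.1, by omega⟩⟩

theorem Sys.not_bl {N : ℤ} {E : ℤ → ℤ → Prop} (h : Sys N E) {a b : ℤ} (hab : E a b) :
    ¬ Bl E a b := by
  rintro ⟨c, d, c', d', h1, h2, hh⟩
  rcases hh with hh | hh | hh
  · exact h.free _ _ _ _ _ _ hab h1 h2 (by omega) (by omega) (by omega) (by omega) (by omega)
  · exact h.free _ _ _ _ _ _ h1 hab h2 (by omega) (by omega) (by omega) (by omega) (by omega)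
  · exact h.free _ _ _ _ _ _ h1 h2 hab (by omega) (by omega) (by omega) (by omega) (by omega)

/-- The top lemma. -/
theorem Sys.top {N : ℤ} {E : ℤ → ℤ → Prop} (h : Sys N E) {a m : ℤ}
    (ham : a < m) (hA : ¬ Bl E a m) (hlen : m - a < 2 * N)
    (hr : ∀ t, E a t → t ≤ m) (hl : ∀ t, E t m → a ≤ t)
    (hbl : ∀ t, m < t → t ≤ a + 2 * N → Bl E a t) : False := by
  obtain ⟨c, d, d', h1, h2, k1, k2, k3⟩ :=
    h.fan (B := a + 2 * N + 1) hA le_rfl (by omega) (fun t u v => hbl t u (by omega))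
  have hp := h.pos
  obtain ⟨u1, v1, w1, e1⟩ := h1
  obtain ⟨u2, v2, w2, e2⟩ := h2
  rcases e2 with e2 | e2
  swap
  · have := hl _ e2.1
    omega
  rcases e1 with e1 | e1
  swap
  · omega
  have e1' := h.dn _ _ (h.dn _ _ e1.1)
  have e2' := h.dn _ _ (h.dn _ _ e2.1)
  have l2 := h.len _ _ e2'
  have hne : d' - N - N ≠ m := by
    intro heq
    rw [heq] at e2'
    have := hl _ e2'
    omega
  exact hA ⟨_, _, _, _, e1', e2', by omega⟩

theorem Sys.notX_aux {N : ℤ} {E : ℤ → ℤ → Prop} (h : Sys N E) {a b : ℤ}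
    (hc : ¬ Bl E a b) (h2 : Two N E a b)
    (hmax : ∀ t, b < t → t - a ≤ 2 * N → ¬ E a t → Bl E a t) :
    ∀ t, E a t → t ≤ b := by
  by_contra hcon
  push Not at hcon
  obtain ⟨t0, ht0, ht0b⟩ := hcon
  obtain ⟨q, ⟨hq, hbq⟩, hqm⟩ := Int.exists_least_of_bdd (P := fun t => E a t ∧ b < t)
    ⟨b, fun z hz => hz.2.le⟩ ⟨t0, ht0, ht0b⟩
  have hp := h.pos
  have lq := h.len _ _ hq
  -- every `Two`-witness ends before `q`
  have hlt : ∀ c d, E c d → a < c → c < a + N → a + N < b → b < d → d ≤ c + N → d < q := by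
    intro c d he k1 k2 k3 k4 k5
    by_contra hdq
    rcases (not_lt.mp hdq).lt_or_eq with hlt | heq
    · exact h.free _ _ _ _ _ _ hq he (h.up _ _ hq) k1 k2 (by omega) hlt (by omega)
    · subst heq
      exact hc ⟨_, _, _, _, he, h.up _ _ hq, by omega⟩
  obtain ⟨c, d, he, k1, k2, k3, k4, k5⟩ := h2
  have hdq := hlt c d he k1 k2 k3 k4 k5
  obtain ⟨α, hα1, hα2, hαq, β, hβ⟩ := h.angle0 hc (h.not_bl hq) (by omega) (by omega)
    (fun t u v => hmax t u (by omega) (fun hh => by have := hqm t ⟨hh, u⟩; omega))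
  have hαc : α ≤ c := by
    by_contra hlt'
    rcases hβ with hβ | hβ
    · exact h.free _ _ _ _ _ _ he hαq hβ.1 (by omega) hα2 (by omega) hdq hβ.2
    · exact h.free _ _ _ _ _ _ hβ.1 he hαq (by omega) (by omega) (by omega) (by omega) hdq
  by_cases hqα : q ≤ α + N
  · have := hlt α q hαq hα1 (by omega) k3 hbq hqα
    omega
  · exact hc ⟨_, _, _, _, h.dn _ _ hαq, hαq, by omega⟩

/-- Every non-edge of length at most `2N` crosses two crossing edges of `E`. -/
theorem Sys.full {N : ℤ} {E : ℤ → ℤ → Prop} (h : Sys N E) {a b : ℤ} (hab : a < b)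
    (hl : b - a ≤ 2 * N) (hE : ¬ E a b) : Bl E a b := by
  by_contra hcon
  obtain ⟨ℓ, ⟨a, hlp, hl, hE, hc⟩, hmax⟩ := Int.exists_greatest_of_bdd
    (P := fun ℓ => ∃ a, 0 < ℓ ∧ ℓ ≤ 2 * N ∧ ¬ E a (a + ℓ) ∧ ¬ Bl E a (a + ℓ))
    ⟨2 * N, fun z hz => hz.choose_spec.2.1⟩
    ⟨b - a, a, by omega, hl, by simpa using hE, by simpa using hcon⟩
  have hp := h.pos
  have hmx : ∀ s t, ℓ < t - s → t - s ≤ 2 * N → ¬ E s t → Bl E s t := by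
    intro s t h1 h2 h3
    by_contra h4
    have := hmax (t - s) ⟨s, by omega, h2, by simpa using h3, by simpa using h4⟩
    omega
  have h2 : Two N E a (a + ℓ) := (h.mx _ _ (by omega) (by omega) hE).resolve_left hc
  have hr := h.notX_aux hc h2 (fun t u v w => hmx _ _ (by omega) v w)
  have hleft : ∀ t, Ref E (-(a + ℓ)) t → t ≤ -a := by
    apply h.ref.notX_aux
    · exact fun hh => hc (bl_of_ref hh)
    · exact two_ref h.dn (by simpa using h2)
    · intro t u v w
      apply bl_ref
      rw [neg_neg]
      refine hmx _ _ (by omega) (by omega) ?_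
      simpa [Ref] using w
  have hlen : ℓ < 2 * N := by
    obtain ⟨c, d, _, _⟩ := h2
    omega
  refine h.top (by omega) hc (by omega) hr ?_ ?_
  · intro t ht
    have := hleft (-t) (by simpa [Ref] using ht)
    omega
  · intro t u v
    refine hmx _ _ (by omega) (by omega) (fun hh => ?_)
    have := hr _ hh
    omega

/-- The angle lemma. -/
theorem Sys.angle {N : ℤ} {E : ℤ → ℤ → Prop} (h : Sys N E) {p x q : ℤ}
    (hx : E p x) (hq : E p q) (hpx : p + 2 ≤ x) (hxq : x < q)
    (hno : ∀ z, E p z → x < z → q ≤ z) :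
    ∃ a, p < a ∧ a < x ∧ E a q ∧ ∃ b, (E x b ∧ q < b) ∨ (E b x ∧ b < p) := by
  have lq := h.len _ _ hq
  rcases (show x + 1 ≤ q by omega).lt_or_eq with hlt | heq
  · refine h.angle0 (h.not_bl hx) (h.not_bl hq) (by omega) hlt (fun t u v => ?_)
    refine h.full (by omega) (by omega) (fun hh => ?_)
    have := hno _ hh u
    omega
  · subst heq
    refine ⟨x - 1, by omega, by omega, ?_, x + 2, Or.inl ⟨h.two x, by omega⟩⟩
    have := h.two (x - 1)
    convert this using 1; ring

/-- `m` is the middle vertex of a star whose edge `s₀s₃` is `[p,q]`. -/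
def P03 (E : ℤ → ℤ → Prop) (m p q : ℤ) : Prop :=
  E p m ∧ E p q ∧ m < q ∧ (∀ z, E p z → m < z → q ≤ z) ∧ (∀ z, E z m → p ≤ z)

/-- `m` is the middle vertex of a star whose edge `s₁s₄` is `[p,q]`. -/
def P14 (E : ℤ → ℤ → Prop) (m p q : ℤ) : Prop :=
  E m q ∧ E p q ∧ p < m ∧ (∀ z, E z q → z < m → z ≤ p) ∧ (∀ z, E m z → z ≤ q)

theorem p14_ref {E : ℤ → ℤ → Prop} {m p q : ℤ} :
    P14 E m p q ↔ P03 (Ref E) (-m) (-q) (-p) := by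
  unfold P14 P03 Ref
  simp only [neg_neg]
  constructor
  · rintro ⟨h1, h2, h3, h4, h5⟩
    refine ⟨h1, h2, by omega, fun z hz hm => ?_, fun z hz => ?_⟩
    · have := h4 _ hz (by omega); omega
    · have := h5 _ hz; omega
  · rintro ⟨h1, h2, h3, h4, h5⟩
    refine ⟨h1, h2, by omega, fun z hz hm => ?_, fun z hz => ?_⟩
    · have := h4 (-z) (by simpa using hz) (by omega); omega
    · have := h5 (-z) (by simpa using hz); omega

theorem P03.two_le {N : ℤ} {E : ℤ → ℤ → Prop} (h : Sys N E) {m p q : ℤ}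
    (hm : P03 E m p q) : p + 2 ≤ m := by
  have h1 := h.two (m - 2)
  rw [sub_add_cancel] at h1
  have := hm.2.2.2.2 _ h1
  omega

theorem P03.unique {E : ℤ → ℤ → Prop} {m m' p q : ℤ}
    (hm : P03 E m p q) (hm' : P03 E m' p q) : m = m' := by
  obtain ⟨a1, a2, a3, a4, a5⟩ := hm
  obtain ⟨b1, b2, b3, b4, b5⟩ := hm'
  rcases lt_trichotomy m m' with hlt | heq | hlt
  · have := a4 _ b1 hlt; omega
  · exact heq
  · have := b4 _ a1 hlt; omega

theorem P14.unique {E : ℤ → ℤ → Prop} {m m' p q : ℤ}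
    (hm : P14 E m p q) (hm' : P14 E m' p q) : m = m' := by
  have := (p14_ref.1 hm).unique (p14_ref.1 hm')
  omega

theorem P03.nonbase {N : ℤ} {E : ℤ → ℤ → Prop} (h : Sys N E) {m p q : ℤ}
    (hm : P03 E m p q) : ¬ E m (m + 2 * N) := by
  intro hb
  have hb' := h.dn _ _ (h.dn _ _ hb)
  rw [show m + 2 * N - N - N = m by ring] at hb'
  have := hm.2.2.2.2 _ hb'
  have := h.len _ _ hm.2.1
  have := hm.2.2.1
  omega

theorem Sys.base_ref {N : ℤ} {E : ℤ → ℤ → Prop} (h : Sys N E) {m : ℤ} :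
    Ref E (-m) (-m + 2 * N) ↔ E m (m + 2 * N) := by
  unfold Ref
  constructor
  · intro hh
    have := h.up _ _ (h.up _ _ hh)
    convert this using 1 <;> ring
  · intro hh
    have := h.dn _ _ (h.dn _ _ hh)
    convert this using 1 <;> ring

theorem P14.nonbase {N : ℤ} {E : ℤ → ℤ → Prop} (h : Sys N E) {m p q : ℤ}
    (hm : P14 E m p q) : ¬ E m (m + 2 * N) := by
  rw [← h.base_ref]
  exact (p14_ref.1 hm).nonbase h.ref

theorem Sys.ex03 {N : ℤ} {E : ℤ → ℤ → Prop} (h : Sys N E) {m : ℤ}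
    (hm : ¬ E m (m + 2 * N)) : ∃ p q, P03 E m p q := by
  have h1 := h.one (m - 1)
  rw [sub_add_cancel] at h1
  obtain ⟨a, ha, hal⟩ := Int.exists_least_of_bdd (P := fun t => E t m)
    ⟨m - 2 * N, fun z hz => by have := h.len _ _ hz; omega⟩ ⟨m - 1, h1⟩
  by_cases hex : ∃ t, E a t ∧ m < t
  · obtain ⟨q, ⟨hq, hmq⟩, hqm⟩ := Int.exists_least_of_bdd (P := fun t => E a t ∧ m < t)
      ⟨m, fun z hz => hz.2.le⟩ hex
    exact ⟨a, q, ha, hq, hmq, fun z h1 h2 => hqm z ⟨h1, h2⟩, hal⟩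
  · push Not at hex
    exfalso
    have hlt := h.lt _ _ ha
    have hlen := h.len _ _ ha
    refine h.top hlt (h.not_bl ha) ?_ hex hal (fun t u v => ?_)
    · rcases hlen.lt_or_eq with hh | hh
      · exact hh
      · have := h.up _ _ (h.up _ _ ha)
        refine (hm ?_).elim
        convert this using 1 <;> omega
    · refine h.full (by omega) (by omega) (fun hh => ?_)
      have := hex _ hh
      omega

theorem Sys.ex14 {N : ℤ} {E : ℤ → ℤ → Prop} (h : Sys N E) {m : ℤ}
    (hm : ¬ E m (m + 2 * N)) : ∃ p q, P14 E m p q := by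
  obtain ⟨p, q, hpq⟩ := h.ref.ex03 (m := -m) (by rwa [h.base_ref])
  exact ⟨-q, -p, p14_ref.2 (by simpa using hpq)⟩

/-- Strong form of the angle lemma at a star. -/
theorem P03.strong {N : ℤ} {E : ℤ → ℤ → Prop} (h : Sys N E) {m p q : ℤ}
    (hm : P03 E m p q) : (∃ a, p < a ∧ a < m ∧ E a q) ∧ ∃ b, E m b ∧ q < b := by
  have h2 := hm.two_le h
  obtain ⟨a1, a2, a3, a4, a5⟩ := hm
  obtain ⟨a, k1, k2, k3, b, hb⟩ := h.angle a1 a2 h2 a3 a4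
  refine ⟨⟨a, k1, k2, k3⟩, b, ?_⟩
  rcases hb with hb | hb
  · exact hb
  · have := a5 _ hb.1
    omega

theorem P14.strong {N : ℤ} {E : ℤ → ℤ → Prop} (h : Sys N E) {m p q : ℤ}
    (hm : P14 E m p q) : ∃ b, E b m ∧ b < p := by
  obtain ⟨_, b, hb, hlt⟩ := (p14_ref.1 hm).strong h.ref
  exact ⟨-b, by simpa [Ref] using hb, by omega⟩

theorem Sys.disj {N : ℤ} {E : ℤ → ℤ → Prop} (h : Sys N E) {x y p q : ℤ}
    (hx : P03 E x p q) (hy : P14 E y p q) : False := by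
  obtain ⟨⟨α, hα1, hα2, hα3⟩, β, hβ1, hβ2⟩ := hx.strong h
  obtain ⟨γ, hγ1, hγ2⟩ := hy.strong h
  obtain ⟨s, e, hs⟩ := h.ex14 (hx.nonbase h)
  obtain ⟨g, r, hg⟩ := h.ex03 (hy.nonbase h)
  obtain ⟨γ', hγ1', hγ2'⟩ := hs.strong h
  obtain ⟨_, β', hβ1', hβ2'⟩ := hg.strong h
  obtain ⟨a1, a2, a3, a4, a5⟩ := hx
  obtain ⟨b1, b2, b3, b4, b5⟩ := hy
  obtain ⟨c1, c2, c3, c4, c5⟩ := hs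
  obtain ⟨d1, d2, d3, d4, d5⟩ := hg
  have hyx : y < x := by
    by_contra hcon
    have := b4 _ hα3 (by omega)
    omega
  have i1 := c5 _ hβ1
  have i2 := d5 _ hγ1
  have i3 := a5 _ hγ1'
  have i4 := b5 _ hβ1'
  rcases lt_trichotomy s y with hlt | heq | hlt
  · rcases lt_trichotomy r x with hr | hr | hr
    · exact h.free _ _ _ _ _ _ d2 a1 b1 (by omega) (by omega) (by omega) (by omega) (by omega)
    · subst hr
      have := a5 _ d2
      omega
    · exact h.free _ _ _ _ _ _ d2 a2 c2 (by omega) (by omega) (by omega) (by omega) (by omega)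
  · subst heq
    have := b5 _ c2
    omega
  · exact h.free _ _ _ _ _ _ a1 b1 c2 (by omega) (by omega) (by omega) (by omega) (by omega)

theorem Sys.cover {N : ℤ} {E : ℤ → ℤ → Prop} (h : Sys N E) {p q : ℤ}
    (hpq : E p q) (hl : 2 < q - p) : ∃ m, P03 E m p q ∨ P14 E m p q := by
  obtain ⟨x, ⟨hx1, hx2⟩, hx3⟩ := Int.exists_greatest_of_bdd (P := fun t => E p t ∧ t < q)
    ⟨q, fun z hz => hz.2.le⟩ ⟨p + 2, h.two p, by omega⟩
  have hq2 := h.two (q - 2)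
  rw [sub_add_cancel] at hq2
  obtain ⟨y, ⟨hy1, hy2⟩, hy3⟩ := Int.exists_least_of_bdd (P := fun t => E t q ∧ p < t)
    ⟨p, fun z hz => hz.2.le⟩ ⟨q - 2, hq2, by omega⟩
  have hpx : p + 2 ≤ x := hx3 _ ⟨h.two p, by omega⟩
  have hno : ∀ z, E p z → x < z → q ≤ z := by
    intro z h1 h2
    by_contra h3
    have := hx3 _ ⟨h1, by omega⟩
    omega
  obtain ⟨a, k1, k2, k3, _⟩ := h.angle hx1 hpq hpx hx2 hno
  have hya := hy3 _ ⟨k3, k1⟩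
  by_cases hA : ∀ z, E z x → p ≤ z
  · exact ⟨x, Or.inl ⟨hx1, hpq, hx2, hno, hA⟩⟩
  by_cases hB : ∀ z, E y z → z ≤ q
  · refine ⟨y, Or.inr ⟨hy1, hpq, hy2, fun z h1 h2 => ?_, hB⟩⟩
    by_contra h3
    have := hy3 _ ⟨h1, by omega⟩
    omega
  push Not at hA hB
  obtain ⟨z, hz, hzp⟩ := hA
  obtain ⟨w, hw, hwq⟩ := hB
  exact (h.free _ _ _ _ _ _ hz hpq hw (by omega) (by omega) (by omega) (by omega)
    (by omega)).elim

theorem Sys.exists_base {N : ℤ} {E : ℤ → ℤ → Prop} (h : Sys N E) :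
    ∃ v, E v (v + 2 * N) := by
  by_contra hcon
  push Not at hcon
  obtain ⟨ℓ, ⟨a, ha⟩, hmax⟩ := Int.exists_greatest_of_bdd (P := fun ℓ => ∃ a, E a (a + ℓ))
    ⟨2 * N, fun z ⟨a, hz⟩ => by have := h.len _ _ hz; omega⟩ ⟨1, 0, h.one 0⟩
  obtain ⟨p, q, a1, a2, a3, a4, a5⟩ := h.ex03 (hcon (a + ℓ))
  have h1 := a5 _ ha
  have h2 := hmax (q - p) ⟨p, by simpa using a2⟩
  omega

theorem Sys.base_unique {N : ℤ} {E : ℤ → ℤ → Prop} (h : Sys N E) {v w : ℤ}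
    (hv : E v (v + 2 * N)) (h1 : v < w) (h2 : w < v + N) : ¬ E w (w + 2 * N) := by
  intro hw
  have := h.pos
  exact h.free _ _ _ _ _ _ hv hw (h.up _ _ hv) h1 h2 (by omega) (by omega) (by omega)

theorem Sys.shift {N : ℤ} {E : ℤ → ℤ → Prop} (h : Sys N E) (t : ℤ) {a b : ℤ} (hab : E a b) :
    E (a + t * N) (b + t * N) := by
  induction t using Int.induction_on with
  | zero => simpa using hab
  | succ k ih =>
    have := h.up _ _ ih
    convert this using 1 <;> ring
  | pred k ih =>
    have := h.dn _ _ ih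
    convert this using 1 <;> ring

theorem Sys.shift_neg {N : ℤ} {E : ℤ → ℤ → Prop} (h : Sys N E) (t : ℤ) {a b : ℤ}
    (hab : E (a + t * N) b) : E a (b - t * N) := by
  have := h.shift (-t) hab
  convert this using 1 <;> ring

theorem Sys.shift_neg' {N : ℤ} {E : ℤ → ℤ → Prop} (h : Sys N E) (t : ℤ) {a b : ℤ}
    (hab : E a (b + t * N)) : E (a - t * N) b := by
  have := h.shift (-t) hab
  convert this using 1 <;> ring

theorem P03.shift {N : ℤ} {E : ℤ → ℤ → Prop} (h : Sys N E) (t : ℤ) {m p q : ℤ}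
    (hm : P03 E m p q) : P03 E (m + t * N) (p + t * N) (q + t * N) := by
  obtain ⟨a1, a2, a3, a4, a5⟩ := hm
  refine ⟨h.shift t a1, h.shift t a2, by omega, fun z h1 h2 => ?_, fun z h1 => ?_⟩
  · have := a4 _ (h.shift_neg t h1) (by omega)
    omega
  · have := a5 _ (h.shift_neg' t h1)
    omega

theorem P14.shift {N : ℤ} {E : ℤ → ℤ → Prop} (h : Sys N E) (t : ℤ) {m p q : ℤ}
    (hm : P14 E m p q) : P14 E (m + t * N) (p + t * N) (q + t * N) := by
  obtain ⟨a1, a2, a3, a4, a5⟩ := hm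
  refine ⟨h.shift t a1, h.shift t a2, by omega, fun z h1 h2 => ?_, fun z h1 => ?_⟩
  · have := a4 _ (h.shift_neg' t h1) (by omega)
    omega
  · have := a5 _ (h.shift_neg t h1)
    omega

theorem exists_chain {S : Set Edge} (hv : ValidEdges S) (hS : ¬ CrossingFree 3 S) :
    ∃ a₁ a₂ a₃ b₁ b₂ b₃ : ℤ, (a₁, b₁) ∈ S ∧ (a₂, b₂) ∈ S ∧ (a₃, b₃) ∈ S ∧
      a₁ < a₂ ∧ a₂ < a₃ ∧ a₃ < b₁ ∧ b₁ < b₂ ∧ b₂ < b₃ := by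
  unfold CrossingFree at hS
  rw [not_not] at hS
  obtain ⟨F, hF, hcard, hcr⟩ := hS
  obtain ⟨e, f, g, hef, heg, hfg, rfl⟩ := Finset.card_eq_three.1 hcard
  have he : e ∈ S := hF (by simp)
  have hf : f ∈ S := hF (by simp)
  have hg : g ∈ S := hF (by simp)
  have c1 := hcr e (by simp) f (by simp) hef
  have c2 := hcr e (by simp) g (by simp) heg
  have c3 := hcr f (by simp) g (by simp) hfg
  have ve := hv e he
  have vf := hv f hf
  have vg := hv g hg
  obtain ⟨e1, e2⟩ := e
  obtain ⟨f1, f2⟩ := f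
  obtain ⟨g1, g2⟩ := g
  simp only [Crosses] at c1 c2 c3 ve vf vg
  rw [min_eq_left ve.le, max_eq_right ve.le] at c1 c2
  rw [min_eq_left vf.le, max_eq_right vf.le] at c1 c3
  rw [min_eq_left vg.le, max_eq_right vg.le] at c2 c3
  rcases c1 with c1 | c1 <;> rcases c2 with c2 | c2 <;> rcases c3 with c3 | c3
  · exact ⟨_, _, _, _, _, _, he, hf, hg, by omega⟩
  · exact ⟨_, _, _, _, _, _, he, hg, hf, by omega⟩
  · omega
  · exact ⟨_, _, _, _, _, _, hg, he, hf, by omega⟩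
  · exact ⟨_, _, _, _, _, _, hf, he, hg, by omega⟩
  · omega
  · exact ⟨_, _, _, _, _, _, hf, hg, he, by omega⟩
  · exact ⟨_, _, _, _, _, _, hg, hf, he, by omega⟩

theorem no_chain {S : Set Edge} (hS : CrossingFree 3 S) {a₁ a₂ a₃ b₁ b₂ b₃ : ℤ}
    (h1 : (a₁, b₁) ∈ S) (h2 : (a₂, b₂) ∈ S) (h3 : (a₃, b₃) ∈ S)
    (k1 : a₁ < a₂) (k2 : a₂ < a₃) (k3 : a₃ < b₁) (k4 : b₁ < b₂) (k5 : b₂ < b₃) : False := by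
  apply hS
  refine ⟨{(a₁, b₁), (a₂, b₂), (a₃, b₃)}, ?_, ?_, ?_⟩
  · intro e he
    simp only [Finset.coe_insert, Finset.coe_singleton, Set.mem_insert_iff,
      Set.mem_singleton_iff] at he
    rcases he with rfl | rfl | rfl <;> assumption
  · refine Finset.card_eq_three.2 ⟨_, _, _, ?_, ?_, ?_, rfl⟩ <;>
      simp only [ne_eq, Prod.mk.injEq, not_and] <;> omega
  · intro e he f hf hne
    simp only [Finset.mem_insert, Finset.mem_singleton] at he hf
    rcases he with rfl | rfl | rfl <;> rcases hf with rfl | rfl | rfl <;>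
      first
        | exact absurd rfl hne
        | (simp only [Crosses]; omega)

theorem sys_of {n : ℕ} (hn : 1 ≤ n) {T : Set Edge} (hT : IsTriangulation n 2 T) :
    Sys (n : ℤ) (fun a b => (a, b) ∈ T) := by
  obtain ⟨hv, hper, hfree, hmax⟩ := hT
  have hN : (1 : ℤ) ≤ n := by exact_mod_cast hn
  have up : ∀ a b : ℤ, (a, b) ∈ T → (a + n, b + n) ∈ T := fun a b h => (hper (a, b)).1 h
  have dn : ∀ a b : ℤ, (a, b) ∈ T → (a - n, b - n) ∈ T := by
    intro a b h
    refine (hper (a - n, b - n)).2 ?_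
    simpa [shift] using h
  have sh : ∀ (t a b : ℤ), (a, b) ∈ T → (a + t * n, b + t * n) ∈ T := by
    intro t a b h
    induction t using Int.induction_on with
    | zero => simpa using h
    | succ k ih =>
      have := up _ _ ih
      convert this using 2 <;> ring
    | pred k ih =>
      have := dn _ _ ih
      convert this using 2 <;> ring
  have free : ∀ a₁ a₂ a₃ b₁ b₂ b₃ : ℤ, (a₁, b₁) ∈ T → (a₂, b₂) ∈ T → (a₃, b₃) ∈ T →
      a₁ < a₂ → a₂ < a₃ → a₃ < b₁ → b₁ < b₂ → b₂ < b₃ → False :=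
    fun _ _ _ _ _ _ h1 h2 h3 => no_chain hfree h1 h2 h3
  have mx : ∀ a b : ℤ, a < b → b - a ≤ 2 * (n : ℤ) → (a, b) ∉ T →
      Bl (fun a b => (a, b) ∈ T) a b ∨ Two n (fun a b => (a, b) ∈ T) a b := by
    intro a b hab hlen hE
    have hnf : ¬ CrossingFree 3 (T ∪ orbitOf n (a, b)) := by
      intro hf
      have := hmax (T ∪ orbitOf n (a, b)) ?_ ?_ hf Set.subset_union_left
      · apply hE
        rw [← this]
        exact Or.inr ⟨0, by simp [shift]⟩
      · rintro e (he | ⟨t, rfl⟩)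
        · exact hv e he
        · simp only [shift]; omega
      · intro e
        constructor
        · rintro (he | ⟨t, rfl⟩)
          · exact Or.inl ((hper e).1 he)
          · refine Or.inr ⟨t + 1, ?_⟩
            simp only [shift, Prod.mk.injEq]
            constructor <;> ring
        · rintro (he | ⟨t, he⟩)
          · exact Or.inl ((hper e).2 he)
          · refine Or.inr ⟨t - 1, ?_⟩
            obtain ⟨e1, e2⟩ := e
            simp only [shift, Prod.mk.injEq] at he ⊢
            constructor <;> linarith
    have hval : ValidEdges (T ∪ orbitOf n (a, b)) := by
      rintro e (he | ⟨t, rfl⟩)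
      · exact hv e he
      · simp only [shift]; omega
    obtain ⟨a₁, a₂, a₃, b₁, b₂, b₃, h1, h2, h3, k1, k2, k3, k4, k5⟩ := exists_chain hval hnf
    -- two crossing translates differ by exactly one period
    have adj : ∀ s t : ℤ, a + s * n < a + t * n → a + t * n < b + s * n → t = s + 1 := by
      intro s t u v
      have h1 : s < t := by nlinarith
      have h2 : t < s + 2 := by
        by_contra hc
        have : (s + 2) * (n : ℤ) ≤ t * n := by nlinarith
        nlinarith
      omega
    have mem : ∀ c d : ℤ, (c, d) ∈ T ∪ orbitOf n (a, b) →
        (c, d) ∈ T ∨ ∃ t : ℤ, c = a + t * n ∧ d = b + t * n := by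
      rintro c d (h | ⟨t, h⟩)
      · exact Or.inl h
      · simp only [shift, Prod.mk.injEq] at h
        exact Or.inr ⟨t, h⟩
    rcases mem _ _ h1 with h1 | ⟨t1, rfl, rfl⟩ <;> rcases mem _ _ h2 with h2 | ⟨t2, rfl, rfl⟩ <;>
      rcases mem _ _ h3 with h3 | ⟨t3, rfl, rfl⟩
    · exact (free _ _ _ _ _ _ h1 h2 h3 k1 k2 k3 k4 k5).elim
    · refine Or.inl ⟨_, _, _, _, sh (-t3) _ _ h1, sh (-t3) _ _ h2, Or.inr (Or.inr ?_)⟩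
      rw [neg_mul]
      omega
    · refine Or.inl ⟨_, _, _, _, sh (-t2) _ _ h1, sh (-t2) _ _ h3, Or.inr (Or.inl ?_)⟩
      rw [neg_mul]
      omega
    · have := adj t2 t3 k2 (by omega)
      subst this
      have g := sh (-t2) _ _ h1
      refine Or.inl ⟨_, _, _, _, dn _ _ g, g, Or.inr (Or.inr ?_)⟩
      rw [neg_mul]
      rw [add_mul, one_mul] at *
      omega
    · refine Or.inl ⟨_, _, _, _, sh (-t1) _ _ h2, sh (-t1) _ _ h3, Or.inl ?_⟩
      rw [neg_mul]
      omega
    · have := adj t1 t3 (by omega) (by omega)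
      subst this
      have g := sh (-t1) _ _ h2
      rw [neg_mul] at g
      rw [add_mul, one_mul] at *
      by_cases hl : b₂ ≤ a₂ + n
      · exact Or.inr ⟨_, _, g, by omega, by omega, by omega, by omega, by omega⟩
      · exact Or.inl ⟨_, _, _, _, dn _ _ g, g, by omega⟩
    · have := adj t1 t2 (by omega) (by omega)
      subst this
      have g := sh (-t1) _ _ h3
      rw [neg_mul] at g
      rw [add_mul, one_mul] at *
      exact Or.inl ⟨_, _, _, _, dn _ _ g, g, by omega⟩
    · have e1 := adj t1 t2 (by omega) (by omega)
      have e2 := adj t1 t3 (by omega) (by omega)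
      rw [e1, e2] at k2
      omega
  have short : ∀ a b : ℤ, a < b → b - a ≤ 2 → (a, b) ∈ T := by
    intro a b hab hl
    by_contra hE
    rcases mx a b hab (by omega) hE with ⟨c, d, c', d', _, _, h⟩ | ⟨c, d, _, h⟩ <;> omega
  exact
    { pos := hN
      lt := fun a b h => hv _ h
      len := by
        intro a b h
        by_contra hc
        exact free _ _ _ _ _ _ h (up _ _ h) (up _ _ (up _ _ h)) (by omega) (by omega) (by omega)
          (by omega) (by omega)
      up := up
      dn := dn
      free := free
      one := fun a => short _ _ (by omega) (by omega)
      two := fun a => short _ _ (by omega) (by omega)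
      mx := mx }

theorem orbit_eq_iff {n : ℕ} {e f : Edge} :
    orbitOf n e = orbitOf n f ↔ ∃ t : ℤ, f.1 = e.1 + t * n ∧ f.2 = e.2 + t * n := by
  constructor
  · intro h
    have hf : f ∈ orbitOf n f := ⟨0, by simp [shift]⟩
    rw [← h] at hf
    obtain ⟨t, ht⟩ := hf
    exact ⟨t, by rw [ht]; exact ⟨rfl, rfl⟩⟩
  · rintro ⟨t, h1, h2⟩
    ext g
    constructor
    · rintro ⟨s, rfl⟩
      refine ⟨s - t, ?_⟩
      simp only [shift, Prod.mk.injEq, h1, h2]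
      constructor <;> ring
    · rintro ⟨s, rfl⟩
      refine ⟨s + t, ?_⟩
      simp only [shift, Prod.mk.injEq, h1, h2]
      constructor <;> ring

/-- Two integers in a half-open window of length `n` that differ by a multiple of `n` agree. -/
theorem window {n : ℕ} {v m m' t : ℤ} (h : m' = m + t * n) (h1 : v ≤ m) (h2 : m < v + n)
    (h3 : v ≤ m') (h4 : m' < v + n) : t = 0 := by
  have a1 : t < 1 := by nlinarith
  have a2 : -1 < t := by nlinarith
  omega

/-- Number of orbits of edges of a fixed length. -/
theorem ncard_len {n : ℕ} (hn : 1 ≤ n) {T : Set Edge} (hT : IsTriangulation n 2 T) (l : ℤ)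
    (hl : ∀ a : ℤ, (a, a + l) ∈ T) :
    ((orbitOf n) '' {e ∈ T | e.2 - e.1 = l}).ncard = n ∧
    ((orbitOf n) '' {e ∈ T | e.2 - e.1 = l}).Finite := by
  have him : (orbitOf n) '' {e ∈ T | e.2 - e.1 = l} =
      (fun a : ℤ => orbitOf n (a, a + l)) '' (Finset.Ico (0 : ℤ) n : Set ℤ) := by
    ext o
    constructor
    · rintro ⟨⟨a, b⟩, ⟨_, he⟩, rfl⟩
      simp only at he
      refine ⟨a % n, ?_, ?_⟩
      · simp only [Finset.coe_Ico, Set.mem_Ico]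
        exact ⟨Int.emod_nonneg _ (by omega), Int.emod_lt_of_pos _ (by omega)⟩
      · have := Int.emod_add_mul_ediv a n
        refine orbit_eq_iff.2 ⟨a / n, ?_, ?_⟩ <;> simp only <;> linarith
    · rintro ⟨a, _, rfl⟩
      exact ⟨(a, a + l), ⟨hl a, by simp⟩, rfl⟩
  rw [him]
  refine ⟨?_, (Finset.finite_toSet _).image _⟩
  rw [Set.ncard_image_of_injOn, Set.ncard_coe_finset]
  · simp
  · intro a ha b hb hab
    simp only [Finset.coe_Ico, Set.mem_Ico] at ha hb
    obtain ⟨t, h1, _⟩ := orbit_eq_iff.1 hab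
    simp only at h1
    have := window (v := 0) h1 ha.1 (by omega) hb.1 (by omega)
    rw [this] at h1
    omega

theorem ncard_rel {n : ℕ} (hn : 1 ≤ n) {T : Set Edge} (hT : IsTriangulation n 2 T) :
    ((orbitOf n) '' {e ∈ T | 2 < e.2 - e.1 ∧ e.2 - e.1 ≤ 2 * (n : ℤ)}).ncard = 2 * (n - 1) ∧
    ((orbitOf n) '' {e ∈ T | 2 < e.2 - e.1 ∧ e.2 - e.1 ≤ 2 * (n : ℤ)}).Finite := by
  have h := sys_of hn hT
  have hN := h.pos
  set E : ℤ → ℤ → Prop := fun a b => (a, b) ∈ T with hE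
  obtain ⟨v, hv⟩ := h.exists_base
  have hex : ∀ (m : ℤ) (i : Bool), ∃ e : Edge, v < m → m < v + n →
      (i = true → P03 E m e.1 e.2) ∧ (i = false → P14 E m e.1 e.2) := by
    intro m i
    by_cases hm : v < m ∧ m < v + n
    · have hnb := h.base_unique hv hm.1 hm.2
      cases i
      · obtain ⟨p, q, hpq⟩ := h.ex14 hnb
        exact ⟨(p, q), fun _ _ => ⟨by simp, fun _ => hpq⟩⟩
      · obtain ⟨p, q, hpq⟩ := h.ex03 hnb
        exact ⟨(p, q), fun _ _ => ⟨fun _ => hpq, by simp⟩⟩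
    · exact ⟨(0, 0), fun h1 h2 => (hm ⟨h1, h2⟩).elim⟩
  choose g hg using hex
  have hg3 : ∀ m, v < m → m < v + n → P03 E m (g m true).1 (g m true).2 :=
    fun m h1 h2 => (hg m true h1 h2).1 rfl
  have hg4 : ∀ m, v < m → m < v + n → P14 E m (g m false).1 (g m false).2 :=
    fun m h1 h2 => (hg m false h1 h2).2 rfl
  -- representative of a non-base vertex in the window
  have hrep : ∀ m, ¬ E m (m + 2 * n) → ∃ t : ℤ, v < m + t * n ∧ m + t * n < v + n := by
    intro m hm
    have e1 := Int.emod_add_mul_ediv (m - v) n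
    have e2 := Int.emod_nonneg (m - v) (show (n : ℤ) ≠ 0 by omega)
    have e3 := Int.emod_lt_of_pos (m - v) (show (0 : ℤ) < n by omega)
    refine ⟨-((m - v) / n), ?_, by linarith⟩
    rcases e2.lt_or_eq with hlt | heq
    · linarith
    · exfalso
      apply hm
      have := h.shift ((m - v) / n) hv
      convert this using 1 <;> linarith
  have him : (orbitOf n) '' {e ∈ T | 2 < e.2 - e.1 ∧ e.2 - e.1 ≤ 2 * (n : ℤ)} =
      (fun mi : ℤ × Bool => orbitOf n (g mi.1 mi.2)) ''
        ((Finset.Ioo v (v + n) ×ˢ (Finset.univ : Finset Bool) : Finset (ℤ × Bool)) :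
          Set (ℤ × Bool)) := by
    ext o
    constructor
    · rintro ⟨⟨p, q⟩, ⟨he, hl, _⟩, rfl⟩
      simp only at hl
      obtain ⟨m, hm | hm⟩ := h.cover he hl
      · obtain ⟨t, t1, t2⟩ := hrep m (hm.nonbase h)
        refine ⟨(m + t * n, true), by simp [t1, t2], ?_⟩
        have k1 := hm.shift h t
        have k2 := hg3 _ t1 t2
        obtain ⟨a1, a2, a3, a4, a5⟩ := k1
        obtain ⟨b1, b2, b3, b4, b5⟩ := k2
        have hp : (g (m + t * n) true).1 = p + t * n := le_antisymm (b5 _ a1) (a5 _ b1)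
        rw [hp] at b1 b2 b4
        have hq : (g (m + t * n) true).2 = q + t * n :=
          le_antisymm (b4 _ a2 a3) (a4 _ b2 b3)
        exact (orbit_eq_iff.2 ⟨t, hp, hq⟩).symm
      · obtain ⟨t, t1, t2⟩ := hrep m (hm.nonbase h)
        refine ⟨(m + t * n, false), by simp [t1, t2], ?_⟩
        have k1 := hm.shift h t
        have k2 := hg4 _ t1 t2
        obtain ⟨a1, a2, a3, a4, a5⟩ := k1
        obtain ⟨b1, b2, b3, b4, b5⟩ := k2
        have hq : (g (m + t * n) false).2 = q + t * n := le_antisymm (a5 _ b1) (b5 _ a1)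
        rw [hq] at b1 b2 b4
        have hp : (g (m + t * n) false).1 = p + t * n :=
          le_antisymm (a4 _ b2 b3) (b4 _ a2 a3)
        exact (orbit_eq_iff.2 ⟨t, hp, hq⟩).symm
    · rintro ⟨⟨m, i⟩, hmi, rfl⟩
      simp only [Finset.coe_product, Set.mem_prod, Finset.coe_Ioo, Set.mem_Ioo,
        Finset.coe_univ, Set.mem_univ, and_true] at hmi
      cases i
      · have k := hg4 m hmi.1 hmi.2
        have k2 := (p14_ref.1 k).two_le h.ref
        refine ⟨g m false, ⟨k.2.1, ?_, h.len _ _ k.2.1⟩, rfl⟩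
        have := k.2.2.1
        omega
      · have k := hg3 m hmi.1 hmi.2
        have k2 := k.two_le h
        refine ⟨g m true, ⟨k.2.1, ?_, h.len _ _ k.2.1⟩, rfl⟩
        have := k.2.2.1
        omega
  rw [him]
  refine ⟨?_, (Finset.finite_toSet _).image _⟩
  rw [Set.ncard_image_of_injOn, Set.ncard_coe_finset, Finset.card_product]
  · simp only [Int.card_Ioo, Finset.card_univ, Fintype.card_bool]
    have : (v + (n : ℤ) - v - 1).toNat = n - 1 := by omega
    rw [this, mul_comm]
  · rintro ⟨m, i⟩ hm ⟨m', i'⟩ hm' heq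
    simp only [Finset.coe_product, Set.mem_prod, Finset.coe_Ioo, Set.mem_Ioo,
      Finset.coe_univ, Set.mem_univ, and_true] at hm hm'
    obtain ⟨t, ht1, ht2⟩ := orbit_eq_iff.1 heq
    simp only at ht1 ht2
    cases i <;> cases i'
    · have k1 := (hg4 m hm.1 hm.2).shift h t
      have k2 := hg4 m' hm'.1 hm'.2
      rw [ht1, ht2] at k2
      have e := k2.unique k1
      have t0 := window e hm.1.le hm.2 hm'.1.le hm'.2
      rw [t0] at e
      simpa using e.symm
    · have k1 := (hg4 m hm.1 hm.2).shift h t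
      have k2 := hg3 m' hm'.1 hm'.2
      rw [ht1, ht2] at k2
      exact (h.disj k2 k1).elim
    · have k1 := (hg3 m hm.1 hm.2).shift h t
      have k2 := hg4 m' hm'.1 hm'.2
      rw [ht1, ht2] at k2
      exact (h.disj k1 k2).elim
    · have k1 := (hg3 m hm.1 hm.2).shift h t
      have k2 := hg3 m' hm'.1 hm'.2
      rw [ht1, ht2] at k2
      have e := k2.unique k1
      have t0 := window e hm.1.le hm.2 hm'.1.le hm'.2
      rw [t0] at e
      simpa using e.symm

theorem orbit_disjoint {n : ℕ} {A B : Set Edge}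
    (hAB : ∀ e ∈ A, ∀ f ∈ B, e.2 - e.1 ≠ f.2 - f.1) :
    Disjoint (orbitOf n '' A) (orbitOf n '' B) := by
  rw [Set.disjoint_left]
  rintro _ ⟨e, he, rfl⟩ ⟨f, hf, hef⟩
  obtain ⟨t, h1, h2⟩ := orbit_eq_iff.1 hef
  exact hAB e he f hf (by omega)

/-- The set of orbits of edges of an `n`-periodic
2-triangulation `T` under translation by `n` has exactly `2(2n−1)` elements,
of which exactly `2(n−1)` are orbits of 2-relevant edges
(edges of length `ℓ` with `2 < ℓ ≤ 2n`). -/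
theorem edge_orbit_counts (n : ℕ) (hn : 1 ≤ n)
    (T : Set Edge) (hT : IsTriangulation n 2 T) :
    ((orbitOf n) '' T).ncard = 2 * (2 * n - 1) ∧
    ((orbitOf n) '' {e ∈ T | 2 < e.2 - e.1 ∧ e.2 - e.1 ≤ 2 * (n : ℤ)}).ncard
      = 2 * (n - 1) := by
  have h := sys_of hn hT
  obtain ⟨r1, r2⟩ := ncard_rel hn hT
  obtain ⟨p1, p2⟩ := ncard_len hn hT 1 h.one
  obtain ⟨q1, q2⟩ := ncard_len hn hT 2 h.two
  refine ⟨?_, r1⟩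
  have hsplit : T = ({e ∈ T | e.2 - e.1 = 1} ∪ {e ∈ T | e.2 - e.1 = 2}) ∪
      {e ∈ T | 2 < e.2 - e.1 ∧ e.2 - e.1 ≤ 2 * (n : ℤ)} := by
    ext e
    simp only [Set.mem_union, Set.mem_setOf_eq]
    constructor
    · intro he
      have l1 := h.lt e.1 e.2 he
      have l2 := h.len e.1 e.2 he
      simp only [he, true_and]
      omega
    · rintro ((he | he) | he) <;> exact he.1
  have hu : orbitOf n '' T = (orbitOf n '' {e ∈ T | e.2 - e.1 = 1} ∪
      orbitOf n '' {e ∈ T | e.2 - e.1 = 2}) ∪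
      orbitOf n '' {e ∈ T | 2 < e.2 - e.1 ∧ e.2 - e.1 ≤ 2 * (n : ℤ)} := by
    rw [← Set.image_union, ← Set.image_union, ← hsplit]
  have d1 : Disjoint (orbitOf n '' {e ∈ T | e.2 - e.1 = 1})
      (orbitOf n '' {e ∈ T | e.2 - e.1 = 2}) := by
    apply orbit_disjoint
    rintro e ⟨_, he⟩ f ⟨_, hf⟩
    omega
  have d2 : Disjoint (orbitOf n '' {e ∈ T | e.2 - e.1 = 1} ∪
      orbitOf n '' {e ∈ T | e.2 - e.1 = 2})
      (orbitOf n '' {e ∈ T | 2 < e.2 - e.1 ∧ e.2 - e.1 ≤ 2 * (n : ℤ)}) := by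
    rw [← Set.image_union]
    apply orbit_disjoint
    rintro e (⟨_, he⟩ | ⟨_, he⟩) f ⟨_, hf, _⟩ <;> omega
  rw [hu, Set.ncard_union_eq d2 (p2.union q2) r2, Set.ncard_union_eq d1 p2 q2, p1, q1, r1]
  omega

end Multitriangulation
end
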